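/- arXiv:2006.10580 — 6 statements merged into one kernel-verified Lean document; each statement's English description precedes it below -/
import Mathlib

section
/- Let M = (M_k) be a nondecreasing logarithmically convex sequence of positive real numbers with M_0 = 1 such that sup_k (M_{k+1}/M_k)^{1/k} < ∞, Σ_{k≥0} 1/((k+1) M_k^{1/k}) = ∞ (C_M is closed under differentiation and quasianalytic), and sup_k M_k^{1/k} = ∞ (C_M properly contains the class of real-analytic functions). Then there exists a C^∞ function F : ℝ² → ℝ such that F ∈ C_{M^{(2)}}(ℝ²), F ∉ C_M(ℝ²), and F∘σ ∈ C_M(ℝ²). -/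
/-!
The function is a series of the rational bumps `t⁶ / P`, `P = t⁶ + (t (x - t))² + y²`, one at each
point `(t, 0)` with `t² = ρ_l = M_l / M_{l + 1} ≤ 1`, of height `c_l = 2⁻ˡ M_l ρ_l ^ l`. By
logarithmic convexity `n ↦ M_n ρ_l ^ n` is smallest at `n = l`, so `c_l ρ_l⁻ⁿ ≤ 2⁻ˡ M_n`.

*Upper bounds.* If the Taylor coefficients of order `α` of the functions whose squares sum to `P`
are at most `√P R ^ |α|`, which for `α = 0` always holds, then those of `P` are at most
`P (6 R) ^ |α|`, and the Leibniz rule for `P * P⁻¹ = 1`, read as a recursion, bounds those of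
`t⁶ / P` by `(24 R) ^ |α|`. In Cartesian coordinates `R = t⁻³ ≤ ρ⁻²`, which costs two steps of
`M` per derivative. The bump has width `t³` in `y`, but it is at distance `t` from the origin, so
its angular width is only `t³ / t = t²`: in polar coordinates `R = 2 t⁻² = 2 ρ⁻¹`, one step per
derivative.

*Lower bound.* On the axis `y = 0` the sign of `∂_y^{2k} (1 / P)` is `(-1)^k` for every bump, so
nothing cancels in the series for `∂_y^{2k} F`. At the centre of the bump of index `2k` this
derivative is at least `(2k)! M_{2k} (4 ρ_{2k})⁻ᵏ` in modulus. Membership of `F` in `C_M` would thus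
bound `ρ_{2k}⁻¹`, hence `M_k ^ (1 / k)`.
-/

open Real Filter Topology
open scoped Classical
noncomputable section
def pd1 (f : ℝ × ℝ → ℝ) : ℝ × ℝ → ℝ := fun x => fderiv ℝ f x (1, 0)
def pd2 (f : ℝ × ℝ → ℝ) : ℝ × ℝ → ℝ := fun x => fderiv ℝ f x (0, 1)
def pd (α : ℕ × ℕ) (f : ℝ × ℝ → ℝ) : ℝ × ℝ → ℝ := pd1^[α.1] (pd2^[α.2] f)
def LogConvexSeq (M : ℕ → ℝ) : Prop := Monotone (fun k => M (k + 1) / M k)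
def MemDC (M : ℕ → ℝ) (f : ℝ × ℝ → ℝ) : Prop :=
  ContDiff ℝ (⊤ : ℕ∞) f ∧
  ∀ K : Set (ℝ × ℝ), IsCompact K →
    ∃ A > (0:ℝ), ∃ B > (0:ℝ), ∀ x ∈ K, ∀ α : ℕ × ℕ,
      |pd α f x| ≤ A * B ^ (α.1 + α.2) * (Nat.factorial α.1 * Nat.factorial α.2) * M (α.1 + α.2)
def blowup : ℝ × ℝ → ℝ × ℝ := fun p => (p.1 * Real.cos p.2, p.1 * Real.sin p.2)
def ostrowski (M : ℕ → ℝ) (r : ℝ) : ℝ := ⨆ n : ℕ, r ^ (n + 2) / M n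
def baseH (M : ℕ → ℝ) (x : ℝ × ℝ) : ℝ :=
  ∑' k : ℕ,
    (M (k + 2) / M (k + 1)) ^ 2 / (2 ^ (k + 1) * ostrowski M (M (k + 2) / M (k + 1))) *
      (1 / (x.1 ^ 2 + (M (k + 2) / M (k + 1) * x.2) ^ 2 + 1))
def blockF (M : ℕ → ℝ) (q ρ : ℝ) (x : ℝ × ℝ) : ℝ := baseH M (x.1 / ρ - q, x.2 / ρ)
def rhoSeq (M : ℕ → ℝ) (n : ℕ) : ℝ := M n / M (n + 1)
def FGamma (M : ℕ → ℝ) (E : ℝ → ℝ) (Λ : Set ℕ) (x : ℝ × ℝ) : ℝ :=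
  ∑' l : ℕ, Set.indicator Λ
    (fun l => blockF M (E (rhoSeq M l) / rhoSeq M l) (rhoSeq M l) x /
      (ostrowski M (rhoSeq M l)⁻¹ * 2 ^ l)) l

section PartialDerivatives

open scoped ContDiff

variable {f g : ℝ × ℝ → ℝ}

lemma contDiff_pd1 (hf : ContDiff ℝ ∞ f) : ContDiff ℝ ∞ (pd1 f) :=
  (hf.fderiv_right (m := ∞) (by simp)).clm_apply contDiff_const

lemma contDiff_pd2 (hf : ContDiff ℝ ∞ f) : ContDiff ℝ ∞ (pd2 f) :=
  (hf.fderiv_right (m := ∞) (by simp)).clm_apply contDiff_const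

lemma contDiff_iterate_pd2 (hf : ContDiff ℝ ∞ f) (n : ℕ) : ContDiff ℝ ∞ (pd2^[n] f) :=
  Function.Iterate.rec _ hf (fun _ => contDiff_pd2) n

lemma pd1_apply (hf : ContDiff ℝ ∞ f) (x y : ℝ) : pd1 f (x, y) = deriv (fun s => f (s, y)) x := by
  have hslice : HasDerivAt (fun s : ℝ => (s, y)) (1, 0) x :=
    (hasDerivAt_id x).prodMk (hasDerivAt_const x y)
  exact (((hf.differentiable (by simp)) (x, y)).hasFDerivAt.comp_hasDerivAt x hslice).deriv.symm

lemma pd2_apply (hf : ContDiff ℝ ∞ f) (x y : ℝ) : pd2 f (x, y) = deriv (fun u => f (x, u)) y := by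
  have hslice : HasDerivAt (fun u : ℝ => (x, u)) (0, 1) y :=
    (hasDerivAt_const y x).prodMk (hasDerivAt_id y)
  exact (((hf.differentiable (by simp)) (x, y)).hasFDerivAt.comp_hasDerivAt y hslice).deriv.symm

lemma iterate_pd1_apply (hf : ContDiff ℝ ∞ f) (n : ℕ) (x y : ℝ) :
    pd1^[n] f (x, y) = iteratedDeriv n (fun s => f (s, y)) x := by
  induction n generalizing f with
  | zero => simp
  | succ n ih =>
    rw [Function.iterate_succ_apply, ih (contDiff_pd1 hf), iteratedDeriv_succ']
    simp only [pd1_apply hf]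

lemma iterate_pd2_apply (hf : ContDiff ℝ ∞ f) (n : ℕ) (x y : ℝ) :
    pd2^[n] f (x, y) = iteratedDeriv n (fun u => f (x, u)) y := by
  induction n generalizing f with
  | zero => simp
  | succ n ih =>
    rw [Function.iterate_succ_apply, ih (contDiff_pd2 hf), iteratedDeriv_succ']
    simp only [pd2_apply hf]

lemma pd_apply (hf : ContDiff ℝ ∞ f) (a b : ℕ) (x y : ℝ) :
    pd (a, b) f (x, y) = iteratedDeriv a (fun s => iteratedDeriv b (fun u => f (s, u)) y) x := by
  simp only [pd, iterate_pd1_apply (contDiff_iterate_pd2 hf b), iterate_pd2_apply hf]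

lemma pd_const_mul (hf : ContDiff ℝ ∞ f) (c : ℝ) (α : ℕ × ℕ) (p : ℝ × ℝ) :
    pd α (fun q => c * f q) p = c * pd α f p := by
  obtain ⟨x, y⟩ := p
  obtain ⟨a, b⟩ := α
  simp only [pd_apply hf, pd_apply (contDiff_const.mul hf), iteratedDeriv_const_mul_field]

lemma contDiff_snd_slice (hf : ContDiff ℝ ∞ f) (x : ℝ) : ContDiff ℝ ∞ (fun u => f (x, u)) :=
  hf.comp (contDiff_const.prodMk contDiff_id)

lemma contDiff_iteratedDeriv_snd (hf : ContDiff ℝ ∞ f) (b : ℕ) (y : ℝ) :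
    ContDiff ℝ ∞ (fun s => iteratedDeriv b (fun u => f (s, u)) y) := by
  simp only [← iterate_pd2_apply hf]
  exact (contDiff_iterate_pd2 hf b).comp (contDiff_id.prodMk contDiff_const)

lemma pd1_pd2_comm (hf : ContDiff ℝ ∞ f) : pd1 (pd2 f) = pd2 (pd1 f) := by
  funext p
  have hdiff : DifferentiableAt ℝ (fderiv ℝ f) p :=
    (hf.fderiv_right (m := ∞) (by simp)).differentiable (by simp) p
  have hsymm : IsSymmSndFDerivAt ℝ f p := hf.contDiffAt.isSymmSndFDerivAt (by
    rw [minSmoothness_of_isRCLikeNormedField]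
    exact WithTop.coe_le_coe.mpr le_top)
  have hsnd (v w : ℝ × ℝ) :
      fderiv ℝ (fun x => fderiv ℝ f x v) p w = fderiv ℝ (fderiv ℝ f) p w v := by
    simp [fderiv_clm_apply hdiff (differentiableAt_const v)]
  exact (hsnd _ _).trans ((hsymm _ _).trans (hsnd _ _).symm)

lemma pd_pd1 (hf : ContDiff ℝ ∞ f) (a b : ℕ) : pd (a, b) (pd1 f) = pd (a + 1, b) f := by
  have hcomm : pd2^[b] (pd1 f) = pd1 (pd2^[b] f) := by
    induction b generalizing f with
    | zero => rfl
    | succ b ih => rw [Function.iterate_succ_apply, ← pd1_pd2_comm hf, ih (contDiff_pd2 hf),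
        ← Function.iterate_succ_apply]
  simp only [pd, hcomm, Function.iterate_succ_apply]

lemma pd_pd2 (f : ℝ × ℝ → ℝ) (a b : ℕ) : pd (a, b) (pd2 f) = pd (a, b + 1) f := rfl

end PartialDerivatives

section TaylorCoefficients

open scoped Nat ContDiff
open Finset.HasAntidiagonal (antidiagonal)

lemma iteratedDeriv_mul_div_factorial {f g : ℝ → ℝ} (hf : ContDiff ℝ ∞ f) (hg : ContDiff ℝ ∞ g)
    (n : ℕ) (x : ℝ) :
    iteratedDeriv n (fun y => f y * g y) x / n ! = ∑ i ∈ antidiagonal n,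
      iteratedDeriv i.1 f x / i.1 ! * (iteratedDeriv i.2 g x / i.2 !) := by
  have hle : (n : WithTop ℕ∞) ≤ ∞ := mod_cast le_top
  rw [Finset.Nat.sum_antidiagonal_eq_sum_range_succ_mk,
    iteratedDeriv_fun_mul (hf.of_le hle).contDiffAt (hg.of_le hle).contDiffAt, Finset.sum_div]
  refine Finset.sum_congr rfl fun i hi => ?_
  rw [Nat.cast_choose ℝ (Nat.lt_succ_iff.mp (Finset.mem_range.mp hi))]
  field_simp

/-- The coefficient `∂₁ᵃ ∂₂ᵇ f (p) / (a! b!)` of the Taylor series of `f` at `p`. -/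
def taylorCoeff (a b : ℕ) (f : ℝ × ℝ → ℝ) (p : ℝ × ℝ) : ℝ := pd (a, b) f p / (a ! * b !)

variable {f g : ℝ × ℝ → ℝ}

lemma taylorCoeff_zero_zero (f : ℝ × ℝ → ℝ) (p : ℝ × ℝ) : taylorCoeff 0 0 f p = f p := by
  simp [taylorCoeff, pd]

lemma pd_eq_taylorCoeff_mul (a b : ℕ) (f : ℝ × ℝ → ℝ) (p : ℝ × ℝ) :
    pd (a, b) f p = taylorCoeff a b f p * (a ! * b !) := by
  rw [taylorCoeff, div_mul_cancel₀ _ (by positivity)]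

lemma taylorCoeff_apply (hf : ContDiff ℝ ∞ f) (a b : ℕ) (x y : ℝ) :
    taylorCoeff a b f (x, y) =
      iteratedDeriv a (fun s => iteratedDeriv b (fun u => f (s, u)) y / b !) x / a ! := by
  rw [taylorCoeff, pd_apply hf, iteratedDeriv_div_const, div_div, mul_comm (a ! : ℝ)]

lemma taylorCoeff_const_of_ne {a b : ℕ} (hab : a + b ≠ 0) (c : ℝ) (p : ℝ × ℝ) :
    taylorCoeff a b (fun _ => c) p = 0 := by
  rw [← Prod.mk.eta (p := p), taylorCoeff_apply contDiff_const]
  rcases eq_or_ne b 0 with rfl | hb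
  · simp [iteratedDeriv_const, show a ≠ 0 by lia]
  · simp [iteratedDeriv_const, hb]

lemma taylorCoeff_const_mul (hf : ContDiff ℝ ∞ f) (c : ℝ) (a b : ℕ) (p : ℝ × ℝ) :
    taylorCoeff a b (fun q => c * f q) p = c * taylorCoeff a b f p := by
  rw [taylorCoeff, taylorCoeff, pd_const_mul hf, mul_div_assoc]

lemma taylorCoeff_add (hf : ContDiff ℝ ∞ f) (hg : ContDiff ℝ ∞ g) (a b : ℕ) (p : ℝ × ℝ) :
    taylorCoeff a b (fun q => f q + g q) p = taylorCoeff a b f p + taylorCoeff a b g p := by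
  have hle (n : ℕ) : (n : WithTop ℕ∞) ≤ ∞ := mod_cast le_top
  have hsnd {h : ℝ × ℝ → ℝ} (hh : ContDiff ℝ ∞ h) (s y : ℝ) :
      ContDiffAt ℝ b (fun u => h (s, u)) y :=
    ((contDiff_snd_slice hh s).of_le (hle b)).contDiffAt
  have hfst {h : ℝ × ℝ → ℝ} (hh : ContDiff ℝ ∞ h) (x y : ℝ) :
      ContDiffAt ℝ a (fun s => iteratedDeriv b (fun u => h (s, u)) y / b !) x :=
    (((contDiff_iteratedDeriv_snd hh b y).div_const _).of_le (hle a)).contDiffAt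
  obtain ⟨x, y⟩ := p
  rw [taylorCoeff_apply hf, taylorCoeff_apply hg, taylorCoeff_apply (hf.add hg), ← add_div,
    ← iteratedDeriv_fun_add (hfst hf x y) (hfst hg x y)]
  simp only [iteratedDeriv_fun_add (hsnd hf _ y) (hsnd hg _ y), add_div]

lemma taylorCoeff_mul (hf : ContDiff ℝ ∞ f) (hg : ContDiff ℝ ∞ g) (a b : ℕ) (p : ℝ × ℝ) :
    taylorCoeff a b (fun q => f q * g q) p =
      ∑ i ∈ antidiagonal a, ∑ j ∈ antidiagonal b,
        taylorCoeff i.1 j.1 f p * taylorCoeff i.2 j.2 g p := by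
  obtain ⟨x, y⟩ := p
  have hsnd (s : ℝ) := iteratedDeriv_mul_div_factorial (contDiff_snd_slice hf s)
    (contDiff_snd_slice hg s) b y
  have hfst {h : ℝ × ℝ → ℝ} (hh : ContDiff ℝ ∞ h) (j : ℕ) :=
    (contDiff_iteratedDeriv_snd hh j y).div_const (j ! : ℝ)
  rw [taylorCoeff_apply (hf.mul hg)]
  simp only [hsnd]
  rw [iteratedDeriv_fun_sum fun j _ => (((hfst hf j.1).mul (hfst hg j.2)).of_le
    (mod_cast le_top)).contDiffAt, Finset.sum_div, Finset.sum_comm]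
  refine Finset.sum_congr rfl fun j _ => ?_
  rw [iteratedDeriv_mul_div_factorial (hfst hf j.1) (hfst hg j.2)]
  simp only [taylorCoeff_apply hf, taylorCoeff_apply hg]

end TaylorCoefficients

section TaylorBounds

open scoped Nat ContDiff
open Finset.HasAntidiagonal (antidiagonal mem_antidiagonal)

variable {f g : ℝ × ℝ → ℝ} {p : ℝ × ℝ} {w w' R R' : ℝ}

/-- The Taylor coefficients of `f` at `p` grow at most geometrically: the one of order `α` is at
most `w * R ^ |α|`. -/
def TaylorBound (f : ℝ × ℝ → ℝ) (p : ℝ × ℝ) (w R : ℝ) : Prop :=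
  ∀ a b : ℕ, |taylorCoeff a b f p| ≤ w * R ^ (a + b)

namespace TaylorBound

lemma abs_apply_le (h : TaylorBound f p w R) : |f p| ≤ w := by
  simpa [taylorCoeff_zero_zero] using h 0 0

lemma const (c : ℝ) (p : ℝ × ℝ) (hR : 0 ≤ R) : TaylorBound (fun _ => c) p |c| R := by
  intro a b
  rcases eq_or_ne (a + b) 0 with hab | hab
  · obtain ⟨rfl, rfl⟩ := Nat.add_eq_zero_iff.mp hab
    simp [taylorCoeff_zero_zero]
  · rw [taylorCoeff_const_of_ne hab, abs_zero]
    positivity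

lemma mono (h : TaylorBound f p w R) (hw : w ≤ w') (hR : 0 ≤ R) (hRR' : R ≤ R') :
    TaylorBound f p w' R' := fun a b => (h a b).trans <|
  mul_le_mul hw (pow_le_pow_left₀ hR hRR' _) (by positivity)
    ((abs_nonneg _).trans (h.abs_apply_le.trans hw))

lemma const_mul (h : TaylorBound f p w R) (hf : ContDiff ℝ ∞ f) (c : ℝ) :
    TaylorBound (fun q => c * f q) p (|c| * w) R := by
  intro a b
  rw [taylorCoeff_const_mul hf, abs_mul, mul_assoc]
  exact mul_le_mul_of_nonneg_left (h a b) (abs_nonneg c)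

lemma add (hf : ContDiff ℝ ∞ f) (hg : ContDiff ℝ ∞ g) (hfb : TaylorBound f p w R)
    (hgb : TaylorBound g p w' R) : TaylorBound (fun q => f q + g q) p (w + w') R := by
  intro a b
  rw [taylorCoeff_add hf hg, add_mul]
  exact (abs_add_le _ _).trans (add_le_add (hfb a b) (hgb a b))

lemma mul (hf : ContDiff ℝ ∞ f) (hg : ContDiff ℝ ∞ g) (hfb : TaylorBound f p w R)
    (hgb : TaylorBound g p w' R) (hR : 0 ≤ R) :
    TaylorBound (fun q => f q * g q) p (w * w') (2 * R) := by
  intro a b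
  have hw : 0 ≤ w := (abs_nonneg _).trans hfb.abs_apply_le
  have hw' : 0 ≤ w' := (abs_nonneg _).trans hgb.abs_apply_le
  have hterm : ∀ i ∈ antidiagonal a, ∀ j ∈ antidiagonal b,
      |taylorCoeff i.1 j.1 f p * taylorCoeff i.2 j.2 g p| ≤ w * w' * R ^ (a + b) := by
    intro i hi j hj
    rw [mem_antidiagonal] at hi hj
    calc |taylorCoeff i.1 j.1 f p * taylorCoeff i.2 j.2 g p|
        ≤ w * R ^ (i.1 + j.1) * (w' * R ^ (i.2 + j.2)) := by
          rw [abs_mul]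
          exact mul_le_mul (hfb _ _) (hgb _ _) (abs_nonneg _) (by positivity)
      _ = w * w' * R ^ (a + b) := by rw [← hi, ← hj]; ring
  have hcard (n : ℕ) : (n + 1 : ℝ) ≤ 2 ^ n := mod_cast Nat.lt_two_pow_self
  calc |taylorCoeff a b (fun q => f q * g q) p|
      ≤ ∑ _i ∈ antidiagonal a, ∑ _j ∈ antidiagonal b, w * w' * R ^ (a + b) := by
        rw [taylorCoeff_mul hf hg]
        exact (Finset.abs_sum_le_sum_abs _ _).trans <| Finset.sum_le_sum fun i hi =>
          (Finset.abs_sum_le_sum_abs _ _).trans (Finset.sum_le_sum (hterm i hi))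
    _ = w * w' * ((a + 1) * (b + 1) * R ^ (a + b)) := by
        simp only [Finset.sum_const, Finset.Nat.card_antidiagonal, nsmul_eq_mul]
        push_cast
        ring
    _ ≤ w * w' * (2 ^ a * 2 ^ b * R ^ (a + b)) := by gcongr <;> exact hcard _
    _ = w * w' * (2 * R) ^ (a + b) := by ring

lemma of_const_mul {K : ℝ} (h : TaylorBound f p (K * w) R) (hfp : |f p| ≤ w) (hK : 1 ≤ K)
    (hR : 0 ≤ R) : TaylorBound f p w (K * R) := by
  intro a b
  rcases eq_or_ne (a + b) 0 with hab | hab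
  · obtain ⟨rfl, rfl⟩ := Nat.add_eq_zero_iff.mp hab
    simpa [taylorCoeff_zero_zero] using hfp
  · have hw : 0 ≤ w := (abs_nonneg _).trans hfp
    calc |taylorCoeff a b f p| ≤ w * (K * R ^ (a + b)) := (h a b).trans_eq (by ring)
      _ ≤ w * (K ^ (a + b) * R ^ (a + b)) := by gcongr; exact le_self_pow₀ hK hab
      _ = w * (K * R) ^ (a + b) := by rw [mul_pow]

end TaylorBound

lemma sum_erase_quarter_pow_le_one (a b : ℕ) :
    ∑ x ∈ (antidiagonal a ×ˢ antidiagonal b).erase ((0, a), (0, b)),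
      (1 / 4 : ℝ) ^ (x.1.1 + x.2.1) ≤ 1 := by
  have hgeom (n : ℕ) : ∑ i ∈ antidiagonal n, (1 / 4 : ℝ) ^ i.1 ≤ 4 / 3 := by
    rw [Finset.Nat.sum_antidiagonal_eq_sum_range_succ_mk]
    refine (Summable.sum_le_tsum _ (fun i _ => by positivity)
      (summable_geometric_of_lt_one (by norm_num) (by norm_num))).trans_eq ?_
    rw [tsum_geometric_of_lt_one (by norm_num) (by norm_num)]
    norm_num
  have hprod : ∑ x ∈ antidiagonal a ×ˢ antidiagonal b, (1 / 4 : ℝ) ^ (x.1.1 + x.2.1) ≤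
      4 / 3 * (4 / 3) := by
    simp only [pow_add, Finset.sum_product, ← Finset.sum_mul_sum]
    exact mul_le_mul (hgeom a) (hgeom b) (by positivity) (by norm_num)
  have herase := Finset.add_sum_erase (antidiagonal a ×ˢ antidiagonal b)
    (fun x => (1 / 4 : ℝ) ^ (x.1.1 + x.2.1)) (a := ((0, a), (0, b))) (by simp)
  norm_num at herase hprod ⊢
  linarith

lemma taylorCoeff_inv_recursion (hf : ContDiff ℝ ∞ f) (hne : ∀ q, f q ≠ 0) {a b : ℕ}
    (hab : a + b ≠ 0) (p : ℝ × ℝ) :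
    f p * taylorCoeff a b f⁻¹ p =
      -∑ x ∈ (antidiagonal a ×ˢ antidiagonal b).erase ((0, a), (0, b)),
        taylorCoeff x.1.1 x.2.1 f p * taylorCoeff x.1.2 x.2.2 f⁻¹ p := by
  have hLeibniz := taylorCoeff_mul hf (hf.inv hne) a b p
  rw [show (fun q => f q * f⁻¹ q) = fun _ => 1 from funext fun q => mul_inv_cancel₀ (hne q),
    taylorCoeff_const_of_ne hab, ← Finset.sum_product', ← Finset.add_sum_erase _ _
    (show ((0, a), (0, b)) ∈ antidiagonal a ×ˢ antidiagonal b by simp)] at hLeibniz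
  simp only [taylorCoeff_zero_zero] at hLeibniz
  linarith

lemma TaylorBound.inv (h : TaylorBound f p |f p| R) (hf : ContDiff ℝ ∞ f) (hne : ∀ q, f q ≠ 0)
    (hR : 0 ≤ R) : TaylorBound f⁻¹ p |f p|⁻¹ (4 * R) := by
  intro a b
  have hfp : 0 < |f p| := abs_pos.mpr (hne p)
  induction hn : a + b using Nat.strong_induction_on generalizing a b with
  | _ n ih =>
  rcases eq_or_ne n 0 with rfl | hn0
  · obtain ⟨rfl, rfl⟩ := Nat.add_eq_zero_iff.mp hn
    simp [taylorCoeff_zero_zero]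
  have hterm : ∀ x ∈ (antidiagonal a ×ˢ antidiagonal b).erase ((0, a), (0, b)),
      |taylorCoeff x.1.1 x.2.1 f p * taylorCoeff x.1.2 x.2.2 f⁻¹ p| ≤
        (4 * R) ^ n * (1 / 4) ^ (x.1.1 + x.2.1) := by
    rintro ⟨⟨i, i'⟩, ⟨j, j'⟩⟩ hx
    simp only [Finset.mem_erase, Finset.mem_product, mem_antidiagonal, ne_eq,
      Prod.mk.injEq] at hx
    have hlt : i' + j' < n := by lia
    rw [abs_mul]
    calc |taylorCoeff i j f p| * |taylorCoeff i' j' f⁻¹ p|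
        ≤ |f p| * R ^ (i + j) * (|f p|⁻¹ * (4 * R) ^ (i' + j')) :=
          mul_le_mul (h i j) (ih _ hlt i' j' rfl) (abs_nonneg _) (by positivity)
      _ = (4 * R * (1 / 4)) ^ (i + j) * (4 * R) ^ (i' + j') := by field_simp
      _ = (4 * R) ^ n * (1 / 4) ^ (i + j) := by
          rw [← hn, ← hx.2.1, ← hx.2.2, mul_pow (4 * R)]; ring
  have hmul : |f p| * |taylorCoeff a b f⁻¹ p| ≤ (4 * R) ^ n :=
    calc |f p| * |taylorCoeff a b f⁻¹ p|
        ≤ ∑ x ∈ (antidiagonal a ×ˢ antidiagonal b).erase ((0, a), (0, b)),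
            (4 * R) ^ n * (1 / 4) ^ (x.1.1 + x.2.1) := by
          rw [← abs_mul, taylorCoeff_inv_recursion hf hne (hn ▸ hn0), abs_neg]
          exact (Finset.abs_sum_le_sum_abs _ _).trans (Finset.sum_le_sum hterm)
      _ ≤ (4 * R) ^ n := by
          rw [← Finset.mul_sum]
          exact mul_le_of_le_one_right (by positivity) (sum_erase_quarter_pow_le_one a b)
  exact (le_inv_mul_iff₀ hfp).mpr hmul

lemma TaylorBound.div_add_sq_add_sq {X Y : ℝ × ℝ → ℝ} {e : ℝ} (he : 0 < e)
    (hX : ContDiff ℝ ∞ X) (hY : ContDiff ℝ ∞ Y) (hR : 0 ≤ R)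
    (hXb : TaylorBound X p √(e + X p ^ 2 + Y p ^ 2) R)
    (hYb : TaylorBound Y p √(e + X p ^ 2 + Y p ^ 2) R) :
    TaylorBound (fun q => e / (e + X q ^ 2 + Y q ^ 2)) p 1 (24 * R) := by
  set P : ℝ × ℝ → ℝ := fun q => e + X q ^ 2 + Y q ^ 2
  have hPpos (q : ℝ × ℝ) : 0 < P q := by positivity
  have hPsmooth : ContDiff ℝ ∞ P := by fun_prop
  have hsq {Z : ℝ × ℝ → ℝ} (hZ : ContDiff ℝ ∞ Z) (hZb : TaylorBound Z p √(P p) R) :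
      TaylorBound (fun q => Z q ^ 2) p (P p) (2 * R) := by
    simpa only [← sq, Real.sq_sqrt (hPpos p).le] using mul hZ hZ hZb hZb hR
  have he_le : |e| ≤ P p := by rw [abs_of_pos he]; nlinarith [sq_nonneg (X p), sq_nonneg (Y p)]
  have hPb : TaylorBound P p (3 * |P p|) (2 * R) := by
    rw [abs_of_pos (hPpos p)]
    refine (add (by fun_prop) (by fun_prop) (add contDiff_const (by fun_prop)
      (const e p (by positivity)) (hsq hX hXb)) (hsq hY hYb)).mono ?_ (by positivity) le_rfl
    linarith
  have hinv := (hPb.of_const_mul le_rfl (by norm_num) (by positivity)).inv hPsmooth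
    (fun q => (hPpos q).ne') (by positivity)
  refine (hinv.const_mul (hPsmooth.inv fun q => (hPpos q).ne') e).mono ?_ (by positivity)
    (by linarith)
  rw [abs_of_pos (hPpos p), ← div_eq_mul_inv]
  exact div_le_one_of_le₀ he_le (hPpos p).le

lemma taylorBound_fst_mul_add {u v : ℝ → ℝ} (hu : ContDiff ℝ ∞ u) (hv : ContDiff ℝ ∞ v)
    {x y : ℝ} (hw : 0 ≤ w) (hR : 0 ≤ R)
    (h0 : ∀ b, |x * iteratedDeriv b v y + iteratedDeriv b u y| ≤ w * R ^ b)
    (h1 : ∀ b, |iteratedDeriv b v y| ≤ w * R ^ (b + 1)) :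
    TaylorBound (fun q => q.1 * v q.2 + u q.2) (x, y) w R := by
  have hle (b : ℕ) : (b : WithTop ℕ∞) ≤ ∞ := mod_cast le_top
  have hsmooth : ContDiff ℝ ∞ (fun q : ℝ × ℝ => q.1 * v q.2 + u q.2) := by fun_prop
  have hsnd (b : ℕ) (s : ℝ) : iteratedDeriv b (fun t => s * v t + u t) y =
      s * iteratedDeriv b v y + iteratedDeriv b u y := by
    rw [iteratedDeriv_fun_add ((contDiff_const.mul hv).of_le (hle b)).contDiffAt
      (hu.of_le (hle b)).contDiffAt, iteratedDeriv_const_mul_field]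
  have hpd (a b : ℕ) :
      |pd (a, b) (fun q => q.1 * v q.2 + u q.2) (x, y)| ≤ w * R ^ (a + b) := by
    have hderiv : deriv (fun s => s * iteratedDeriv b v y + iteratedDeriv b u y) =
        fun _ => iteratedDeriv b v y := by
      funext s
      simp
    rw [pd_apply hsmooth]
    simp only [hsnd]
    match a with
    | 0 => simpa using h0 b
    | 1 => simpa [hderiv, add_comm] using h1 b
    | a + 2 =>
      rw [iteratedDeriv_succ', hderiv]
      simp only [iteratedDeriv_const, Nat.add_eq_zero_iff, one_ne_zero, and_false, if_false,
        abs_zero]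
      positivity
  intro a b
  have hfact : (1 : ℝ) ≤ a ! * b ! := mod_cast Nat.mul_pos a.factorial_pos b.factorial_pos
  rw [taylorCoeff, abs_div, abs_of_pos (zero_lt_one.trans_le hfact)]
  exact (div_le_self (abs_nonneg _) hfact).trans (hpd a b)

end TaylorBounds

section Bump

open scoped ContDiff

lemma taylorBound_affine {c d e w R x y : ℝ} (hR : 0 ≤ R) (h : |c * x + d * y + e| ≤ w)
    (hc : |c| ≤ w * R) (hd : |d| ≤ w * R) :
    TaylorBound (fun q => c * q.1 + d * q.2 + e) (x, y) w R := by
  have hw : 0 ≤ w := (abs_nonneg _).trans h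
  have hderiv : deriv (fun u => d * u + e) = fun _ => d := by funext u; simp
  have hfun : (fun q : ℝ × ℝ => c * q.1 + d * q.2 + e) = fun q => q.1 * c + (d * q.2 + e) := by
    funext q; ring
  rw [hfun]
  refine taylorBound_fst_mul_add (u := fun u => d * u + e) (v := fun _ => c)
    (by fun_prop) contDiff_const hw hR (fun b => ?_) (fun b => ?_)
  · match b with
    | 0 => simpa [mul_comm, ← add_assoc] using h
    | 1 => simpa [hderiv] using hd
    | b + 2 =>
      rw [iteratedDeriv_succ' (f := fun u => d * u + e), hderiv]
      simp only [iteratedDeriv_const, Nat.add_eq_zero_iff, OfNat.ofNat_ne_zero, one_ne_zero,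
        and_false, if_false, mul_zero, add_zero, abs_zero]
      positivity
  · match b with
    | 0 => simpa using hc
    | b + 1 =>
      simp only [iteratedDeriv_const, Nat.add_eq_zero_iff, one_ne_zero, and_false, if_false,
        abs_zero]
      positivity

lemma taylorBound_fst_mul_add_const {v : ℝ → ℝ} (hv : ContDiff ℝ ∞ v) {e K w R x y : ℝ}
    (hR : 1 ≤ R) (h0 : |x * v y + e| ≤ w) (hK : ∀ b, |iteratedDeriv b v y| ≤ K)
    (hx : K * |x| ≤ w * R) (hvy : |v y| ≤ w * R) (hKw : K ≤ w * R ^ 2) :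
    TaylorBound (fun q => q.1 * v q.2 + e) (x, y) w R := by
  have hw : 0 ≤ w := (abs_nonneg _).trans h0
  have hmono {m n : ℕ} (hmn : m ≤ n) : w * R ^ m ≤ w * R ^ n := by gcongr
  refine taylorBound_fst_mul_add (u := fun _ => e) contDiff_const hv hw (zero_le_one.trans hR)
    (fun b => ?_) (fun b => ?_)
  · match b with
    | 0 => simpa using h0
    | b + 1 =>
      rw [iteratedDeriv_const, if_neg b.succ_ne_zero, add_zero, abs_mul, mul_comm]
      calc |iteratedDeriv (b + 1) v y| * |x| ≤ K * |x| := by gcongr; exact hK _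
        _ ≤ w * R ^ 1 := by rwa [pow_one]
        _ ≤ w * R ^ (b + 1) := hmono (by lia)
  · match b with
    | 0 => simpa using hvy
    | b + 1 => exact (hK _).trans (hKw.trans (hmono (by lia)))

/-- The rational bump of height `1` centred at `(t, 0)`, of width `t ^ 2` in the first variable
and `t ^ 3` in the second. Seen from the origin, its angular width is `t ^ 2`. -/
def bump (t : ℝ) (p : ℝ × ℝ) : ℝ := t ^ 6 / (t ^ 6 + (t * (p.1 - t)) ^ 2 + p.2 ^ 2)

variable {t : ℝ}

lemma contDiff_bump (ht : t ≠ 0) : ContDiff ℝ ∞ (bump t) := by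
  unfold bump
  exact contDiff_const.div (by fun_prop) fun p => by positivity

lemma contDiff_blowup : ContDiff ℝ ∞ blowup := by
  unfold blowup
  fun_prop

lemma pow_three_le_sqrt (t X Y : ℝ) : t ^ 3 ≤ √(t ^ 6 + X ^ 2 + Y ^ 2) :=
  Real.le_sqrt_of_sq_le (by nlinarith [sq_nonneg X, sq_nonneg Y])

lemma taylorBound_bump (ht : 0 < t) (ht1 : t ≤ 1) (p : ℝ × ℝ) :
    TaylorBound (bump t) p 1 (24 / t ^ 3) := by
  obtain ⟨x, y⟩ := p
  set s := √(t ^ 6 + (t * (x - t)) ^ 2 + y ^ 2)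
  have hone : 1 ≤ s * (1 / t ^ 3) := by
    rw [mul_one_div, one_le_div (by positivity)]
    exact pow_three_le_sqrt t _ _
  have hX : TaylorBound (fun q => t * (q.1 - t)) (x, y) s (1 / t ^ 3) := by
    have h := taylorBound_affine (c := t) (d := 0) (e := -t ^ 2) (x := x) (y := y) (w := s)
      (R := 1 / t ^ 3) (by positivity)
      (Real.abs_le_sqrt (by nlinarith [sq_nonneg y, pow_pos ht 6]))
      ((abs_of_pos ht).trans_le (ht1.trans hone)) (by rw [abs_zero]; positivity)
    convert h using 2
    ring
  have hY : TaylorBound (fun q => q.2) (x, y) s (1 / t ^ 3) := by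
    have h := taylorBound_affine (c := 0) (d := 1) (e := 0) (x := x) (y := y) (w := s)
      (R := 1 / t ^ 3) (by positivity)
      (Real.abs_le_sqrt (by nlinarith [sq_nonneg (t * (x - t)), pow_pos ht 6]))
      (by rw [abs_zero]; positivity) (abs_one.trans_le hone)
    simpa using h
  have h := TaylorBound.div_add_sq_add_sq (X := fun q => t * (q.1 - t)) (Y := fun q => q.2)
    (pow_pos ht 6) (by fun_prop) (by fun_prop) (by positivity) hX hY
  rwa [mul_one_div] at h

lemma abs_le_sqrt_mul {Q z : ℝ} (ht : 0 < t) (hz : t ^ 4 * z ^ 2 ≤ 4 * Q) :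
    |z| ≤ √Q * (2 / t ^ 2) := by
  have h : |t ^ 2 * z / 2| ≤ √Q := Real.abs_le_sqrt (by linarith)
  rw [abs_div, abs_mul, abs_of_pos (pow_pos ht 2), abs_two] at h
  rw [mul_div_assoc', le_div_iff₀ (by positivity)]
  linarith

lemma pow_four_mul_radius_sq_le (ht1 : t ^ 2 ≤ 1) {r c s : ℝ} (hcs : c ^ 2 + s ^ 2 = 1) :
    t ^ 4 * r ^ 2 ≤ 4 * (t ^ 6 + (t * (r * c - t)) ^ 2 + (r * s) ^ 2) := by
  have ht4 : t ^ 4 ≤ 1 := by nlinarith [sq_nonneg t]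
  have hX : t ^ 4 * (r * c) ^ 2 ≤ 2 * (t * (r * c - t)) ^ 2 + 2 * t ^ 6 :=
    calc t ^ 4 * (r * c) ^ 2 ≤ t ^ 4 * (2 * (r * c - t) ^ 2 + 2 * t ^ 2) := by
          gcongr; nlinarith [sq_nonneg (r * c - 2 * t)]
      _ = t ^ 2 * (2 * (t * (r * c - t)) ^ 2) + 2 * t ^ 6 := by ring
      _ ≤ 2 * (t * (r * c - t)) ^ 2 + 2 * t ^ 6 := by
          have h := mul_le_of_le_one_left (sq_nonneg (t * (r * c - t))) ht1
          linarith
  have hY : t ^ 4 * (r * s) ^ 2 ≤ (r * s) ^ 2 := mul_le_of_le_one_left (sq_nonneg _) ht4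
  calc t ^ 4 * r ^ 2 = t ^ 4 * (r * c) ^ 2 + t ^ 4 * (r * s) ^ 2 := by
        linear_combination (-t ^ 4 * r ^ 2) * hcs
    _ ≤ 4 * (t ^ 6 + (t * (r * c - t)) ^ 2 + (r * s) ^ 2) := by
        nlinarith [sq_nonneg (t * (r * c - t)), sq_nonneg (r * s), sq_nonneg (t ^ 3)]

lemma pow_four_mul_sin_sq_le (ht : 0 < t) (ht1 : t ^ 2 ≤ 1) {r c s : ℝ}
    (hcs : c ^ 2 + s ^ 2 = 1) :
    t ^ 4 * s ^ 2 ≤ 4 * (t ^ 6 + (t * (r * c - t)) ^ 2 + (r * s) ^ 2) := by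
  have ht6 : 0 ≤ t ^ 6 := by positivity
  rcases le_total (t ^ 2) (4 * r ^ 2) with hr | hr
  · have hY : t ^ 4 * s ^ 2 ≤ 4 * (r * s) ^ 2 :=
      calc t ^ 4 * s ^ 2 = t ^ 2 * (t ^ 2 * s ^ 2) := by ring
        _ ≤ 1 * (4 * r ^ 2 * s ^ 2) := by gcongr
        _ = 4 * (r * s) ^ 2 := by ring
    nlinarith [sq_nonneg (t * (r * c - t))]
  · have hX : t ^ 4 * s ^ 2 ≤ 4 * (t * (r * c - t)) ^ 2 := by
      have hrc : |r * c| ≤ t / 2 := abs_le_of_sq_le_sq (by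
        nlinarith [mul_nonneg (sq_nonneg r) (sq_nonneg s)]) (by positivity)
      have hdist : t ≤ 2 * (t - r * c) := by linarith [(abs_le.mp hrc).2]
      calc t ^ 4 * s ^ 2 ≤ t ^ 4 := mul_le_of_le_one_right (by positivity) (by nlinarith)
        _ = t ^ 2 * t ^ 2 := by ring
        _ ≤ t ^ 2 * (2 * (t - r * c)) ^ 2 := by gcongr
        _ = 4 * (t * (r * c - t)) ^ 2 := by ring
    nlinarith [sq_nonneg (r * s)]

lemma taylorBound_bump_comp_blowup (ht : 0 < t) (ht1 : t ≤ 1) (p : ℝ × ℝ) :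
    TaylorBound (bump t ∘ blowup) p 1 (48 / t ^ 2) := by
  obtain ⟨r, θ⟩ := p
  set s := √(t ^ 6 + (t * (r * cos θ - t)) ^ 2 + (r * sin θ) ^ 2)
  have ht2 : t ^ 2 ≤ 1 := pow_le_one₀ ht.le ht1
  have hR : 1 ≤ 2 / t ^ 2 := by rw [one_le_div (by positivity)]; linarith
  have ht_le : t ≤ s * (2 / t ^ 2) := by
    rw [mul_div_assoc', le_div_iff₀ (by positivity)]
    nlinarith [pow_three_le_sqrt t (t * (r * cos θ - t)) (r * sin θ), pow_pos ht 3]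
  have hone : 1 ≤ s * (2 / t ^ 2) ^ 2 :=
    calc 1 ≤ t * (2 / t ^ 2) := by
          rw [mul_div_assoc', one_le_div (by positivity)]; nlinarith
      _ ≤ s * (2 / t ^ 2) * (2 / t ^ 2) := by gcongr
      _ = s * (2 / t ^ 2) ^ 2 := by ring
  have hr : |r| ≤ s * (2 / t ^ 2) :=
    abs_le_sqrt_mul ht (pow_four_mul_radius_sq_le ht2 (cos_sq_add_sin_sq θ))
  have hX : TaylorBound (fun q => t * (q.1 * cos q.2 - t)) (r, θ) s (2 / t ^ 2) := by
    have hcos (b : ℕ) : |iteratedDeriv b (fun θ => t * cos θ) θ| ≤ t := by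
      rw [iteratedDeriv_const_mul_field, abs_mul, abs_of_pos ht]
      exact mul_le_of_le_one_right ht.le (abs_iteratedDeriv_cos_le_one b θ)
    rw [show (fun q : ℝ × ℝ => t * (q.1 * cos q.2 - t)) =
      fun q => q.1 * (t * cos q.2) + -t ^ 2 by funext q; ring]
    exact taylorBound_fst_mul_add_const (by fun_prop) hR
      (Real.abs_le_sqrt (by nlinarith [sq_nonneg (r * sin θ), pow_pos ht 6])) hcos
      ((mul_le_of_le_one_left (abs_nonneg r) ht1).trans hr) ((hcos 0).trans ht_le)
      (ht1.trans hone)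
  have hY : TaylorBound (fun q => q.1 * sin q.2) (r, θ) s (2 / t ^ 2) := by
    simpa using taylorBound_fst_mul_add_const (v := sin) (e := 0) Real.contDiff_sin hR
      (Real.abs_le_sqrt (by nlinarith [sq_nonneg (t * (r * cos θ - t)), pow_pos ht 6]))
      (fun b => abs_iteratedDeriv_sin_le_one b θ) ((one_mul _).trans_le hr)
      (abs_le_sqrt_mul ht (pow_four_mul_sin_sq_le ht ht2 (cos_sq_add_sin_sq θ))) hone
  have h := TaylorBound.div_add_sq_add_sq (X := fun q => t * (q.1 * cos q.2 - t))
    (Y := fun q => q.1 * sin q.2) (pow_pos ht 6) (by fun_prop) (by fun_prop) (by positivity) hX hY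
  rwa [show 24 * (2 / t ^ 2) = 48 / t ^ 2 by ring] at h

end Bump

section AxisDerivatives

open scoped Nat ContDiff
open Finset.HasAntidiagonal (antidiagonal mem_antidiagonal)

lemma iteratedDeriv_const_add_sq_zero_div_factorial (c : ℝ) (i : ℕ) :
    iteratedDeriv i (fun u => c + u ^ 2) 0 / i ! = if i = 0 then c else if i = 2 then 1 else 0 := by
  rcases eq_or_ne i 0 with rfl | hi
  · simp
  · rw [iteratedDeriv_const_add (Nat.pos_of_ne_zero hi), iteratedDeriv_fun_pow_zero, if_neg hi]
    split_ifs with h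
    · simp [h]
    · simp

lemma iteratedDeriv_inv_const_add_sq_zero {c : ℝ} (hc : 0 < c) (k : ℕ) :
    iteratedDeriv (2 * k) (fun u => (c + u ^ 2)⁻¹) 0 = (-1) ^ k * (2 * k)! / c ^ (k + 1) := by
  have hne (u : ℝ) : c + u ^ 2 ≠ 0 := by positivity
  have hsmooth : ContDiff ℝ ∞ (fun u => c + u ^ 2) := by fun_prop
  set τ : ℕ → ℝ := fun n => iteratedDeriv n (fun u => c + u ^ 2)⁻¹ 0 / (n !)
  have hrec (n : ℕ) : c * τ (n + 2) + τ n = 0 := by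
    have h := iteratedDeriv_mul_div_factorial hsmooth (hsmooth.inv hne) (n + 2) 0
    rw [show (fun u => (c + u ^ 2) * (fun u => c + u ^ 2)⁻¹ u) = fun _ => 1 from
      funext fun u => mul_inv_cancel₀ (hne u), iteratedDeriv_const, if_neg (by lia), zero_div,
      Finset.Nat.sum_antidiagonal_succ, Finset.Nat.sum_antidiagonal_succ] at h
    simp only [iteratedDeriv_const_add_sq_zero_div_factorial] at h
    rw [Finset.sum_eq_single (0, n)] at h
    · simpa using h.symm
    · rintro ⟨i, j⟩ hij hij0
      have hi : i ≠ 0 := by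
        rintro rfl
        exact hij0 (by simpa using mem_antidiagonal.mp hij)
      simp [hi]
    · simp
  have hτ : τ (2 * k) = (-1) ^ k / c ^ (k + 1) := by
    induction k with
    | zero => simp [τ]
    | succ k ih =>
      have h := hrec (2 * k)
      rw [ih] at h
      rw [Nat.mul_succ, eq_div_iff (by positivity)]
      field_simp at h
      linear_combination h
  rw [mul_div_right_comm, ← hτ]
  exact (div_mul_cancel₀ _ (by positivity)).symm

lemma pd_bump_axis {t : ℝ} (ht : 0 < t) (k : ℕ) (x : ℝ) :
    pd (0, 2 * k) (bump t) (x, 0) =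
      (-1) ^ k * (t ^ 6 * (2 * k)! / (t ^ 6 + (t * (x - t)) ^ 2) ^ (k + 1)) := by
  rw [pd_apply (contDiff_bump ht.ne')]
  simp only [bump, div_eq_mul_inv, iteratedDeriv_zero]
  rw [iteratedDeriv_const_mul_field, iteratedDeriv_inv_const_add_sq_zero (by positivity)]
  ring

end AxisDerivatives

section Series

open scoped Nat ContDiff

variable {ι : Type*} {g : ι → ℝ × ℝ → ℝ}

/-- A family of smooth functions to whose partial derivatives of every order the Weierstrass
M-test applies on the whole plane, so that the sum of the family can be differentiated
termwise. -/
structure SummableDerivs (g : ι → ℝ × ℝ → ℝ) : Prop where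
  contDiff (i : ι) : ContDiff ℝ ∞ (g i)
  exists_bound (a b : ℕ) : ∃ u : ι → ℝ, Summable u ∧ ∀ i x, |pd (a, b) (g i) x| ≤ u i

lemma opNorm_le_abs_add_abs (L : ℝ × ℝ →L[ℝ] ℝ) : ‖L‖ ≤ |L (1, 0)| + |L (0, 1)| := by
  refine L.opNorm_le_bound (by positivity) fun v => ?_
  have hv : L v = v.1 * L (1, 0) + v.2 * L (0, 1) := by
    rw [← smul_eq_mul, ← smul_eq_mul, ← map_smul, ← map_smul, ← map_add]
    simp
  calc ‖L v‖ ≤ |v.1| * |L (1, 0)| + |v.2| * |L (0, 1)| := by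
        rw [hv, Real.norm_eq_abs, ← abs_mul, ← abs_mul]
        exact abs_add_le _ _
    _ ≤ ‖v‖ * |L (1, 0)| + ‖v‖ * |L (0, 1)| := by
        gcongr
        exacts [norm_fst_le v, norm_snd_le v]
    _ = (|L (1, 0)| + |L (0, 1)|) * ‖v‖ := by ring

namespace SummableDerivs

lemma summable_pd (hg : SummableDerivs g) (a b : ℕ) (x : ℝ × ℝ) :
    Summable fun i => pd (a, b) (g i) x := by
  obtain ⟨u, hu, hgu⟩ := hg.exists_bound a b
  exact Summable.of_norm_bounded hu fun i => hgu i x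

protected lemma pd1 (hg : SummableDerivs g) : SummableDerivs fun i => pd1 (g i) where
  contDiff i := contDiff_pd1 (hg.contDiff i)
  exists_bound a b := by
    simpa only [pd_pd1 (hg.contDiff _)] using hg.exists_bound (a + 1) b

protected lemma pd2 (hg : SummableDerivs g) : SummableDerivs fun i => pd2 (g i) where
  contDiff i := contDiff_pd2 (hg.contDiff i)
  exists_bound a b := by simpa only [pd_pd2] using hg.exists_bound a (b + 1)

protected lemma iterate_pd2 (hg : SummableDerivs g) (n : ℕ) :
    SummableDerivs fun i => pd2^[n] (g i) := by
  induction n with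
  | zero => exact hg
  | succ n ih => simpa only [Function.iterate_succ_apply'] using ih.pd2

lemma exists_fderiv_bound (hg : SummableDerivs g) :
    ∃ u : ι → ℝ, Summable u ∧ ∀ i x, ‖fderiv ℝ (g i) x‖ ≤ u i := by
  obtain ⟨u, hu, hgu⟩ := hg.exists_bound 1 0
  obtain ⟨v, hv, hgv⟩ := hg.exists_bound 0 1
  exact ⟨fun i => u i + v i, hu.add hv, fun i x =>
    (opNorm_le_abs_add_abs _).trans (add_le_add (hgu i x) (hgv i x))⟩

lemma hasFDerivAt_tsum (hg : SummableDerivs g) (x : ℝ × ℝ) :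
    HasFDerivAt (fun y => ∑' i, g i y) (∑' i, fderiv ℝ (g i) x) x := by
  obtain ⟨u, hu, hgu⟩ := hg.exists_fderiv_bound
  exact _root_.hasFDerivAt_tsum hu
    (fun i y => ((hg.contDiff i).differentiable (by simp) y).hasFDerivAt) hgu
    (hg.summable_pd 0 0 x) x

lemma fderiv_tsum_apply (hg : SummableDerivs g) (x v : ℝ × ℝ) :
    fderiv ℝ (fun y => ∑' i, g i y) x v = ∑' i, fderiv ℝ (g i) x v := by
  obtain ⟨u, hu, hgu⟩ := hg.exists_fderiv_bound
  rw [(hg.hasFDerivAt_tsum x).fderiv]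
  exact (ContinuousLinearMap.apply ℝ ℝ v).map_tsum (Summable.of_norm_bounded hu fun i => hgu i x)

lemma pd1_tsum (hg : SummableDerivs g) :
    pd1 (fun y => ∑' i, g i y) = fun x => ∑' i, pd1 (g i) x :=
  funext fun x => hg.fderiv_tsum_apply x (1, 0)

lemma pd2_tsum (hg : SummableDerivs g) :
    pd2 (fun y => ∑' i, g i y) = fun x => ∑' i, pd2 (g i) x :=
  funext fun x => hg.fderiv_tsum_apply x (0, 1)

lemma contDiff_tsum (hg : SummableDerivs g) : ContDiff ℝ ∞ (fun y => ∑' i, g i y) := by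
  rw [contDiff_infty]
  intro n
  induction n generalizing g with
  | zero =>
    exact contDiff_zero.mpr <| continuous_iff_continuousAt.mpr fun x =>
      (hg.hasFDerivAt_tsum x).continuousAt
  | succ n ih =>
    have hfderiv : fderiv ℝ (fun y => ∑' i, g i y) = fun x =>
        (∑' i, pd1 (g i) x) • ContinuousLinearMap.fst ℝ ℝ ℝ +
          (∑' i, pd2 (g i) x) • ContinuousLinearMap.snd ℝ ℝ ℝ := by
      funext x
      ext <;> simp [hg.fderiv_tsum_apply, pd1, pd2]
    push_cast
    rw [contDiff_succ_iff_fderiv, hfderiv]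
    exact ⟨fun x => (hg.hasFDerivAt_tsum x).differentiableAt, by simp,
      ((ih hg.pd1).smul contDiff_const).add ((ih hg.pd2).smul contDiff_const)⟩

lemma iterate_pd1_tsum (hg : SummableDerivs g) (n : ℕ) :
    pd1^[n] (fun y => ∑' i, g i y) = fun x => ∑' i, pd1^[n] (g i) x := by
  induction n generalizing g with
  | zero => rfl
  | succ n ih => simp only [Function.iterate_succ_apply, hg.pd1_tsum, ih hg.pd1]

lemma iterate_pd2_tsum (hg : SummableDerivs g) (n : ℕ) :
    pd2^[n] (fun y => ∑' i, g i y) = fun x => ∑' i, pd2^[n] (g i) x := by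
  induction n generalizing g with
  | zero => rfl
  | succ n ih => simp only [Function.iterate_succ_apply, hg.pd2_tsum, ih hg.pd2]

lemma pd_tsum (hg : SummableDerivs g) (α : ℕ × ℕ) :
    pd α (fun y => ∑' i, g i y) = fun x => ∑' i, pd α (g i) x := by
  simp only [pd, hg.iterate_pd2_tsum, (hg.iterate_pd2 α.2).iterate_pd1_tsum]

end SummableDerivs

lemma abs_pd_le_of_abs_taylorCoeff_le {f : ℝ × ℝ → ℝ} {p : ℝ × ℝ} {a b : ℕ} {w : ℝ}
    (h : |taylorCoeff a b f p| ≤ w) : |pd (a, b) f p| ≤ w * (a ! * b !) := by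
  rw [pd_eq_taylorCoeff_mul, abs_mul, abs_of_nonneg (by positivity : (0 : ℝ) ≤ a ! * b !)]
  gcongr

variable {u : ι → ℝ} {B : ℝ} {W : ℕ → ℝ}

lemma summableDerivs_of_abs_taylorCoeff_le (hg : ∀ i, ContDiff ℝ ∞ (g i)) (hu : Summable u)
    (hgu : ∀ i p a b, |taylorCoeff a b (g i) p| ≤ u i * (B ^ (a + b) * W (a + b))) :
    SummableDerivs g where
  contDiff := hg
  exists_bound a b := ⟨_, (hu.mul_right _).mul_right _,
    fun i p => abs_pd_le_of_abs_taylorCoeff_le (hgu i p a b)⟩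

lemma memDC_tsum (hg : ∀ i, ContDiff ℝ ∞ (g i)) (hu : Summable u) (hB : 0 < B)
    (hW : ∀ n, 0 ≤ W n)
    (hgu : ∀ i p a b, |taylorCoeff a b (g i) p| ≤ u i * (B ^ (a + b) * W (a + b))) :
    MemDC W (fun p => ∑' i, g i p) := by
  have hsum := summableDerivs_of_abs_taylorCoeff_le hg hu hgu
  refine ⟨hsum.contDiff_tsum, fun K _ =>
    ⟨|∑' i, u i| + 1, by positivity, B, hB, fun x _ ⟨a, b⟩ => ?_⟩⟩
  have hWab := hW (a + b)
  calc |pd (a, b) (fun p => ∑' i, g i p) x| = ‖∑' i, pd (a, b) (g i) x‖ := by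
        rw [hsum.pd_tsum, Real.norm_eq_abs]
    _ ≤ ∑' i, u i * (B ^ (a + b) * W (a + b)) * (a ! * b !) :=
        tsum_of_norm_bounded ((hu.mul_right _).mul_right _).hasSum
          fun i => abs_pd_le_of_abs_taylorCoeff_le (hgu i x a b)
    _ = (∑' i, u i) * (B ^ (a + b) * W (a + b)) * (a ! * b !) := by
        rw [tsum_mul_right, tsum_mul_right]
    _ ≤ (|∑' i, u i| + 1) * (B ^ (a + b) * W (a + b)) * (a ! * b !) := by
        gcongr
        linarith [le_abs_self (∑' i, u i)]
    _ = (|∑' i, u i| + 1) * B ^ (a + b) * (a ! * b !) * W (a + b) := by ring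

lemma abs_le_abs_tsum_of_mul_nonneg {f : ι → ℝ} (hf : Summable f) {s : ℝ} (hs : |s| = 1)
    (hsf : ∀ i, 0 ≤ s * f i) (i : ι) : |f i| ≤ |∑' j, f j| :=
  calc |f i| = s * f i := by rw [← abs_of_nonneg (hsf i), abs_mul, hs, one_mul]
    _ ≤ ∑' j, s * f j := (hf.mul_left s).le_tsum i fun j _ => hsf j
    _ = s * ∑' j, f j := tsum_mul_left
    _ ≤ |s * ∑' j, f j| := le_abs_self _
    _ = |∑' j, f j| := by rw [abs_mul, hs, one_mul]

end Series

section Weights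

variable {M : ℕ → ℝ}

lemma rhoSeq_pos (hM : ∀ k, 0 < M k) (l : ℕ) : 0 < rhoSeq M l := div_pos (hM l) (hM (l + 1))

lemma inv_rhoSeq (M : ℕ → ℝ) (l : ℕ) : (rhoSeq M l)⁻¹ = M (l + 1) / M l := inv_div _ _

lemma antitone_rhoSeq (hM : ∀ k, 0 < M k) (hlc : LogConvexSeq M) : Antitone (rhoSeq M) := by
  intro k l hkl
  rw [← inv_le_inv₀ (rhoSeq_pos hM k) (rhoSeq_pos hM l), inv_rhoSeq, inv_rhoSeq]
  exact hlc hkl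

lemma mul_rhoSeq_succ (hM : ∀ k, 0 < M k) (k : ℕ) : M (k + 1) * rhoSeq M k = M k :=
  mul_div_cancel₀ _ (hM (k + 1)).ne'

lemma mul_rhoSeq_pow_self_le (hM : ∀ k, 0 < M k) (hlc : LogConvexSeq M) (l n : ℕ) :
    M l * rhoSeq M l ^ l ≤ M n * rhoSeq M l ^ n := by
  have hρ := rhoSeq_pos hM l
  have hanti := antitone_rhoSeq hM hlc
  rcases le_total l n with h | h
  · induction n, h using Nat.le_induction with
    | base => rfl
    | succ n hln ih =>
      calc M l * rhoSeq M l ^ l ≤ M n * rhoSeq M l ^ n := ih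
        _ = M (n + 1) * rhoSeq M n * rhoSeq M l ^ n := by rw [mul_rhoSeq_succ hM]
        _ ≤ M (n + 1) * rhoSeq M l * rhoSeq M l ^ n := by
          gcongr
          exacts [(hM _).le, hanti hln]
        _ = M (n + 1) * rhoSeq M l ^ (n + 1) := by ring
  · induction h using Nat.decreasingInduction with
    | self => rfl
    | of_succ n hnl ih =>
      calc M l * rhoSeq M l ^ l ≤ M (n + 1) * rhoSeq M l ^ (n + 1) := ih
        _ = M (n + 1) * rhoSeq M l * rhoSeq M l ^ n := by ring
        _ ≤ M (n + 1) * rhoSeq M n * rhoSeq M l ^ n := by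
          gcongr
          exacts [(hM _).le, hanti (by lia)]
        _ = M n * rhoSeq M l ^ n := by rw [mul_rhoSeq_succ hM]

lemma le_mul_pow_of_inv_rhoSeq_le (hM : ∀ k, 0 < M k) {C : ℝ} (hC : ∀ l, (rhoSeq M l)⁻¹ ≤ C)
    (k : ℕ) : M k ≤ M 0 * C ^ k := by
  induction k with
  | zero => simp
  | succ k ih =>
    have hratio := hC k
    rw [inv_rhoSeq, div_le_iff₀ (hM k)] at hratio
    have hC0 : 0 ≤ C := (inv_pos.mpr (rhoSeq_pos hM 0)).le.trans (hC 0)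
    calc M (k + 1) ≤ C * M k := hratio
      _ ≤ C * (M 0 * C ^ k) := by gcongr
      _ = M 0 * C ^ (k + 1) := by ring

lemma exists_lt_inv_rhoSeq (hM : ∀ k, 0 < M k) (hroot : ∀ C : ℝ, ∃ k : ℕ, C < M k ^ (k : ℝ)⁻¹)
    (C : ℝ) : ∃ l, C < (rhoSeq M l)⁻¹ := by
  by_contra! hC
  have hC0 : 0 ≤ C := (inv_pos.mpr (rhoSeq_pos hM 0)).le.trans (hC 0)
  obtain ⟨k, hk⟩ := hroot (max 1 (M 0) * max 1 C)
  rcases eq_or_ne k 0 with rfl | hk0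
  · -- The `0`-th root is `M 0 ^ 0⁻¹ = M 0 ^ 0 = 1`.
    have hone : 1 ≤ max 1 (M 0) * max 1 C :=
      one_le_mul_of_one_le_of_one_le (le_max_left _ _) (le_max_left _ _)
    simp only [CharP.cast_eq_zero, inv_zero, rpow_zero] at hk
    linarith
  · refine hk.not_ge ?_
    rw [rpow_inv_le_iff_of_pos (hM k).le (by positivity) (by positivity), rpow_natCast, mul_pow]
    refine (le_mul_pow_of_inv_rhoSeq_le hM hC k).trans ?_
    gcongr
    exacts [(le_max_right _ _).trans (le_self_pow₀ (le_max_left _ _) hk0), le_max_right _ _]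

/-- The height of the `l`-th bump in the series `bumpSeries M`: up to the factor `2 ^ (-l)`, the
largest constant `c` such that `c * (rhoSeq M l)⁻¹ ^ n ≤ M n` for all `n`. -/
def amplitude (M : ℕ → ℝ) (l : ℕ) : ℝ := (1 / 2) ^ l * (M l * rhoSeq M l ^ l)

lemma amplitude_pos (hM : ∀ k, 0 < M k) (l : ℕ) : 0 < amplitude M l := by
  have hMl := hM l
  have hρ := rhoSeq_pos hM l
  unfold amplitude
  positivity

lemma amplitude_mul_inv_pow_le (hM : ∀ k, 0 < M k) (hlc : LogConvexSeq M) (l n : ℕ) :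
    amplitude M l * (rhoSeq M l)⁻¹ ^ n ≤ (1 / 2) ^ l * M n := by
  rw [inv_pow, ← div_eq_mul_inv, div_le_iff₀ (pow_pos (rhoSeq_pos hM l) n), amplitude, mul_assoc]
  exact mul_le_mul_of_nonneg_left (mul_rhoSeq_pow_self_le hM hlc l n) (by positivity)

end Weights

section BumpSeries

open scoped Nat ContDiff

variable {M : ℕ → ℝ}

lemma abs_taylorCoeff_amplitude_mul_le (hM : ∀ k, 0 < M k) (hlc : LogConvexSeq M) {l j : ℕ}
    {f : ℝ × ℝ → ℝ} (hf : ContDiff ℝ ∞ f) {p : ℝ × ℝ} {c : ℝ} (hc : 0 ≤ c)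
    (hfb : TaylorBound f p 1 (c * (rhoSeq M l)⁻¹ ^ j)) (a b : ℕ) :
    |taylorCoeff a b (fun q => amplitude M l * f q) p| ≤
      (1 / 2) ^ l * (c ^ (a + b) * M (j * (a + b))) :=
  have hamp := amplitude_pos hM l
  calc |taylorCoeff a b (fun q => amplitude M l * f q) p|
      ≤ amplitude M l * (1 * (c * (rhoSeq M l)⁻¹ ^ j) ^ (a + b)) := by
        rw [taylorCoeff_const_mul hf, abs_mul, abs_of_pos hamp]
        gcongr
        exact hfb a b
    _ = c ^ (a + b) * (amplitude M l * (rhoSeq M l)⁻¹ ^ (j * (a + b))) := by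
        rw [mul_pow, ← pow_mul]; ring
    _ ≤ c ^ (a + b) * ((1 / 2) ^ l * M (j * (a + b))) := by
        exact mul_le_mul_of_nonneg_left (amplitude_mul_inv_pow_le hM hlc l _) (by positivity)
    _ = (1 / 2) ^ l * (c ^ (a + b) * M (j * (a + b))) := by ring

lemma taylorBound_bump_sqrt {ρ : ℝ} (hρ : 0 < ρ) (hρ1 : ρ ≤ 1) (p : ℝ × ℝ) :
    TaylorBound (bump (√ρ)) p 1 (24 * ρ⁻¹ ^ 2) := by
  have ht : 0 < √ρ := sqrt_pos.mpr hρ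
  have ht1 : √ρ ≤ 1 := sqrt_le_one.mpr hρ1
  refine (taylorBound_bump ht ht1 p).mono le_rfl (by positivity) ?_
  rw [div_eq_mul_inv, inv_pow]
  gcongr
  calc ρ ^ 2 = √ρ ^ 4 := by rw [show 4 = 2 * 2 from rfl, pow_mul, sq_sqrt hρ.le]
    _ ≤ √ρ ^ 3 := pow_le_pow_of_le_one ht.le ht1 (by simp)

lemma taylorBound_bump_sqrt_comp_blowup {ρ : ℝ} (hρ : 0 < ρ) (hρ1 : ρ ≤ 1) (p : ℝ × ℝ) :
    TaylorBound (bump (√ρ) ∘ blowup) p 1 (48 * ρ⁻¹ ^ 1) := by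
  rw [pow_one, ← div_eq_mul_inv]
  simpa only [sq_sqrt hρ.le] using
    taylorBound_bump_comp_blowup (sqrt_pos.mpr hρ) (sqrt_le_one.mpr hρ1) p

/-- The function separating the classes of `M` and of its shift: the series of the bumps centred at
`(√ρ_l, 0)`, where `ρ_l = rhoSeq M l`, of heights `amplitude M l`. Only the indices `l` for which
the centre lies within distance `1` of the origin contribute. -/
def bumpSeries (M : ℕ → ℝ) (p : ℝ × ℝ) : ℝ :=
  ∑' l : {l // rhoSeq M l ≤ 1}, amplitude M l * bump (√(rhoSeq M l)) p

lemma contDiff_amplitude_mul_bump (hM : ∀ k, 0 < M k) (l : ℕ) :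
    ContDiff ℝ ∞ fun p => amplitude M l * bump (√(rhoSeq M l)) p :=
  contDiff_const.mul (contDiff_bump (sqrt_ne_zero'.mpr (rhoSeq_pos hM l)))

lemma abs_taylorCoeff_amplitude_mul_bump_le (hM : ∀ k, 0 < M k) (hlc : LogConvexSeq M)
    (l : {l // rhoSeq M l ≤ 1}) (p : ℝ × ℝ) (a b : ℕ) :
    |taylorCoeff a b (fun q => amplitude M l * bump (√(rhoSeq M l)) q) p| ≤
      (1 / 2) ^ (l : ℕ) * (24 ^ (a + b) * M (2 * (a + b))) :=
  have hρ := rhoSeq_pos hM l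
  abs_taylorCoeff_amplitude_mul_le hM hlc (contDiff_bump (sqrt_ne_zero'.mpr hρ)) (by simp)
    (taylorBound_bump_sqrt hρ l.2 p) a b

lemma summableDerivs_amplitude_mul_bump (hM : ∀ k, 0 < M k) (hlc : LogConvexSeq M) :
    SummableDerivs fun (l : {l // rhoSeq M l ≤ 1}) p => amplitude M l * bump (√(rhoSeq M l)) p :=
  summableDerivs_of_abs_taylorCoeff_le (W := fun n => M (2 * n))
    (fun l => contDiff_amplitude_mul_bump hM l) (summable_geometric_two.subtype _)
    (abs_taylorCoeff_amplitude_mul_bump_le hM hlc)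

lemma memDC_bumpSeries (hM : ∀ k, 0 < M k) (hlc : LogConvexSeq M) :
    MemDC (fun n => M (2 * n)) (bumpSeries M) :=
  memDC_tsum (fun l => contDiff_amplitude_mul_bump hM l) (summable_geometric_two.subtype _)
    (by simp) (fun n => (hM (2 * n)).le) (abs_taylorCoeff_amplitude_mul_bump_le hM hlc)

lemma memDC_bumpSeries_comp_blowup (hM : ∀ k, 0 < M k) (hlc : LogConvexSeq M) :
    MemDC M (bumpSeries M ∘ blowup) := by
  refine memDC_tsum (B := 48)
    (fun l => (contDiff_amplitude_mul_bump hM l).comp contDiff_blowup)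
    (summable_geometric_two.subtype _) (by simp) (fun n => (hM n).le) fun l p a b => ?_
  have hρ := rhoSeq_pos hM l
  simpa only [Function.comp_apply, one_mul] using abs_taylorCoeff_amplitude_mul_le hM hlc
    ((contDiff_bump (sqrt_ne_zero'.mpr hρ)).comp contDiff_blowup) (by simp)
    (taylorBound_bump_sqrt_comp_blowup hρ l.2 p) a b

lemma abs_pd_amplitude_mul_bump_le (hM : ∀ k, 0 < M k) (hlc : LogConvexSeq M)
    (l : {l // rhoSeq M l ≤ 1}) (k : ℕ) (x : ℝ) :
    |pd (0, 2 * k) (fun p => amplitude M l * bump (√(rhoSeq M l)) p) (x, 0)| ≤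
      |pd (0, 2 * k) (bumpSeries M) (x, 0)| := by
  have hsum := summableDerivs_amplitude_mul_bump hM hlc
  unfold bumpSeries
  rw [hsum.pd_tsum]
  refine abs_le_abs_tsum_of_mul_nonneg (hsum.summable_pd 0 (2 * k) (x, 0)) (s := (-1) ^ k)
    (by simp) (fun i => ?_) l
  have hρ := sqrt_pos.mpr (rhoSeq_pos hM i)
  have hamp := amplitude_pos hM i
  rw [pd_const_mul (contDiff_bump hρ.ne'), pd_bump_axis hρ, mul_left_comm, ← mul_assoc ((-1) ^ k),
    ← mul_pow, neg_one_mul, neg_neg, one_pow, one_mul]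
  positivity

lemma abs_pd_amplitude_mul_bump_center (hM : ∀ k, 0 < M k) (k : ℕ) :
    |pd (0, 2 * k) (fun p => amplitude M (2 * k) * bump (√(rhoSeq M (2 * k))) p)
      (√(rhoSeq M (2 * k)), 0)| = ((rhoSeq M (2 * k))⁻¹ / 4) ^ k * ((2 * k)! * M (2 * k)) := by
  have hρ := rhoSeq_pos hM (2 * k)
  have hMk := hM (2 * k)
  have ht := sqrt_pos.mpr hρ
  have ht6 : √(rhoSeq M (2 * k)) ^ 6 = rhoSeq M (2 * k) ^ 3 := by
    rw [show 6 = 2 * 3 from rfl, pow_mul, sq_sqrt hρ.le]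
  have hamp := amplitude_pos hM (2 * k)
  rw [pd_const_mul (contDiff_bump ht.ne'), pd_bump_axis ht, sub_self, mul_zero, ht6, abs_mul,
    abs_mul, abs_pow, abs_neg, abs_one, one_pow, one_mul, abs_of_pos hamp,
    abs_of_pos (by positivity), amplitude, zero_pow two_ne_zero, add_zero, pow_mul (1 / 2), div_pow,
    div_pow, div_pow, inv_pow]
  generalize rhoSeq M (2 * k) = ρ at *
  field_simp
  ring

lemma not_memDC_bumpSeries (hM : ∀ k, 0 < M k) (hlc : LogConvexSeq M)
    (hroot : ∀ C : ℝ, ∃ k : ℕ, C < M k ^ (k : ℝ)⁻¹) : ¬ MemDC M (bumpSeries M) := by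
  rintro ⟨-, hbound⟩
  obtain ⟨A, -, B, hB, hAB⟩ :=
    hbound (Set.Icc 0 1 ×ˢ {0}) (isCompact_Icc.prod isCompact_singleton)
  have hcenter (k : ℕ) (hk : rhoSeq M (2 * k) ≤ 1) :
      ((rhoSeq M (2 * k))⁻¹ / 4) ^ k ≤ A * (B ^ 2) ^ k := by
    have hpos : 0 < (2 * k)! * M (2 * k) := mul_pos (by positivity) (hM _)
    refine le_of_mul_le_mul_right ?_ hpos
    calc ((rhoSeq M (2 * k))⁻¹ / 4) ^ k * ((2 * k)! * M (2 * k))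
        = _ := (abs_pd_amplitude_mul_bump_center hM k).symm
      _ ≤ _ := abs_pd_amplitude_mul_bump_le hM hlc ⟨2 * k, hk⟩ k _
      _ ≤ _ := hAB _ ⟨⟨sqrt_nonneg _, sqrt_le_one.mpr hk⟩, Set.mem_singleton 0⟩ (0, 2 * k)
      _ = A * (B ^ 2) ^ k * ((2 * k)! * M (2 * k)) := by
        simp only [zero_add, Nat.factorial_zero, Nat.cast_one, pow_mul]; ring
  obtain ⟨l, hl⟩ := exists_lt_inv_rhoSeq hM hroot (max 1 (4 * (max 1 A * B ^ 2)))
  have hle : (rhoSeq M l)⁻¹ ≤ (rhoSeq M (2 * (l + 1)))⁻¹ :=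
    inv_anti₀ (rhoSeq_pos hM _) (antitone_rhoSeq hM hlc (by lia))
  have hone := ((le_max_left _ _).trans_lt hl).trans_le hle
  have hpow : ((rhoSeq M (2 * (l + 1)))⁻¹ / 4) ^ (l + 1) ≤ (max 1 A * B ^ 2) ^ (l + 1) := by
    refine (hcenter (l + 1) ((one_lt_inv₀ (rhoSeq_pos hM _)).mp hone).le).trans ?_
    rw [mul_pow]
    gcongr
    exact (le_max_right 1 A).trans (le_self_pow₀ (le_max_left 1 A) l.succ_ne_zero)
  have hroot_le := le_of_pow_le_pow_left₀ l.succ_ne_zero (by positivity) hpow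
  linarith [((le_max_right _ _).trans_lt hl).trans_le hle]

end BumpSeries

theorem quasianalytic_estimate_blowup_self_general (M : ℕ → ℝ) (hMpos : ∀ k, 0 < M k)
    (hMlc : LogConvexSeq M) (hMan : ∀ C : ℝ, ∃ k : ℕ, C < M k ^ ((k : ℝ)⁻¹)) :
    ∃ F : ℝ × ℝ → ℝ, ContDiff ℝ (⊤ : ℕ∞) F ∧
      MemDC (fun k => M (2 * k)) F ∧ ¬ MemDC M F ∧ MemDC M (F ∘ blowup) :=
  have hmem := memDC_bumpSeries hMpos hMlc
  ⟨bumpSeries M, hmem.1, hmem, not_memDC_bumpSeries hMpos hMlc hMan,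
    memDC_bumpSeries_comp_blowup hMpos hMlc⟩

/-- Theorem 1.2, second part: if `C_M` is quasianalytic, closed under differentiation,
and properly contains the analytic functions, then there exists
`F ∈ C_{M^{(2)}}(ℝ²) \ C_M(ℝ²)` with `F ∘ σ ∈ C_M(ℝ²)`. -/
theorem quasianalytic_estimate_blowup_self (M : ℕ → ℝ)
    (hMpos : ∀ k, 0 < M k) (hMmono : Monotone M) (hM0 : M 0 = 1)
    (hMlc : LogConvexSeq M)
    (hMder : ∃ B : ℝ, ∀ k : ℕ, (M (k + 1) / M k) ^ ((k : ℝ)⁻¹) ≤ B)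
    (hMqa : ¬ Summable (fun k : ℕ => 1 / ((k + 1 : ℝ) * M k ^ ((k : ℝ)⁻¹))))
    (hMan : ∀ C : ℝ, ∃ k : ℕ, C < M k ^ ((k : ℝ)⁻¹)) :
    ∃ F : ℝ × ℝ → ℝ, ContDiff ℝ (⊤ : ℕ∞) F ∧
      MemDC (fun k => M (2 * k)) F ∧ ¬ MemDC M F ∧ MemDC M (F ∘ blowup) :=
  quasianalytic_estimate_blowup_self_general M hMpos hMlc hMan
end
end

section
/- There exists a nondecreasing logarithmically convex sequence M = (M_k) of positive real numbers with M_0 = 1 such that: (a) sup_k (M_{k+1}/M_k)^{1/k} < ∞ (C_M is closed under differentiation); (b) Σ_{k≥1} 1/((k+1) (M_{2k})^{1/k}) = ∞ (C_{M^{(2)}} is quasianalytic); and (c) inf_{k≥1} (M_k²/M_{2k})^{1/k} = 0 (so that C_{M²} ⊊ C_{M^{(2)}}). -/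
/-! Write `M n = ∏ i < n, μ i` with `μ ≥ 1` nondecreasing. Then `M (2n) ^ (1/n) ≤ μ (2n-1) ^ 2` and
`(M n ^ 2 / M (2n)) ^ (1/n) ≤ μ (n-1) / μ n`, so it suffices that `∑ 1 / ((k+1) μ k ^ 2)` diverges,
that `μ` has arbitrarily large multiplicative jumps, and that it grows at most exponentially. Only
odd indices enter the first estimate, but the odd part of a divergent nonincreasing series of
nonnegative terms still diverges.

Let `μ` equal `j!` on the `j`-th of a sequence of consecutive blocks: its jumps are
`(j+1)! / j! = j+1`. The harmonic series diverges, so the `j`-th block can be made so long that its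
harmonic sum is at least `(j+1)! ^ 2`. Then each block adds at least `1` to the series, and `j!` is
reached so late that `μ k ≤ k + 1`. -/

open Real Filter Topology
open scoped Classical
noncomputable section
lemma rpow_inv_natCast_le_of_le_pow {x y : ℝ} {n : ℕ} (hn : n ≠ 0) (hx : 0 ≤ x) (hy : 0 ≤ y)
    (h : x ≤ y ^ n) : x ^ ((n : ℝ)⁻¹) ≤ y := by
  rwa [Real.rpow_inv_le_iff_of_pos hx hy (by positivity), Real.rpow_natCast]

lemma summable_comp_two_mul_add_one_iff {f : ℕ → ℝ} (hf : Antitone f) :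
    Summable (fun k => f (2 * k + 1)) ↔ Summable f := by
  refine ⟨fun hodd => ?_, fun h => h.comp_injective fun _ _ _ => by omega⟩
  have hodd_anti : Antitone (fun k => f (2 * k + 1)) := fun _ _ h => hf (by omega)
  have hnonneg (k : ℕ) : 0 ≤ f k :=
    (hodd_anti.le_of_tendsto hodd.tendsto_atTop_zero k).trans (hf (by omega))
  have heven : Summable (fun k => f (2 * k)) :=
    (summable_nat_add_iff 1).mp <|
      hodd.of_nonneg_of_le (fun _ => hnonneg _) fun k => hf (by omega : 2 * k + 1 ≤ 2 * (k + 1))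
  exact (heven.hasSum.even_add_odd hodd.hasSum).summable

lemma tendsto_sum_Ico_of_summable {E : Type*} [AddCommGroup E] [TopologicalSpace E]
    [IsTopologicalAddGroup E] {f : ℕ → E} (hf : Summable f) {N : ℕ → ℕ} (hN : Monotone N)
    (hN_top : Tendsto N atTop atTop) :
    Tendsto (fun j => ∑ k ∈ Finset.Ico (N j) (N (j + 1)), f k) atTop (𝓝 0) := by
  have hsum : Tendsto (fun j => ∑ k ∈ Finset.range (N j), f k) atTop (𝓝 (∑' k, f k)) :=
    hf.hasSum.tendsto_sum_nat.comp hN_top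
  have hdiff := (hsum.comp (tendsto_add_atTop_nat 1)).sub hsum
  rw [sub_self] at hdiff
  exact hdiff.congr fun j => (Finset.sum_Ico_eq_sub _ (hN j.le_succ)).symm

lemma exists_gt_le_sum_Ico {a : ℕ → ℝ} (ha : ∀ k, 0 ≤ a k) (hdiv : ¬ Summable a) (m : ℕ) (C : ℝ) :
    ∃ n, m < n ∧ C ≤ ∑ k ∈ Finset.Ico m n, a k := by
  have htop := (not_summable_iff_tendsto_nat_atTop_of_nonneg ha).mp hdiv
  obtain ⟨n, hsum, hmn⟩ := ((htop.eventually_ge_atTop (C + ∑ k ∈ Finset.range m, a k)).and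
    (eventually_gt_atTop m)).exists
  refine ⟨n, hmn, ?_⟩
  rw [Finset.sum_Ico_eq_sub _ hmn.le]
  linarith

lemma exists_strictMono_forall_le_sum_Ico {a : ℕ → ℝ} (ha : ∀ k, 0 ≤ a k) (hdiv : ¬ Summable a)
    (c : ℕ → ℝ) :
    ∃ N : ℕ → ℕ, StrictMono N ∧ N 0 = 0 ∧
      ∀ j, c j ≤ ∑ k ∈ Finset.Ico (N j) (N (j + 1)), a k := by
  choose next lt_next le_sum using exists_gt_le_sum_Ico ha hdiv
  let N : ℕ → ℕ := Nat.rec 0 fun j n => next n (c j)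
  exact ⟨N, strictMono_nat_of_lt_succ fun j => lt_next (N j) (c j), rfl,
    fun j => le_sum (N j) (c j)⟩

/-- The index `j` of the block `[N j, N (j + 1))` that contains `k`, when `N` is strictly increasing
and `N 0 = 0`. Since then `j ≤ N j`, the search for the largest `j` with `N j ≤ k` stops at `k`. -/
def blockIndex (N : ℕ → ℕ) (k : ℕ) : ℕ := Nat.findGreatest (fun j => N j ≤ k) k

section blockIndex

variable {N : ℕ → ℕ}

lemma gc_blockIndex (hN : StrictMono N) (hN₀ : N 0 = 0) :
    GaloisConnection N (blockIndex N) := by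
  intro j k
  refine ⟨fun h => Nat.le_findGreatest (hN.le_apply.trans h) h, fun h => ?_⟩
  have hle : N (blockIndex N k) ≤ k :=
    Nat.findGreatest_spec (P := fun j => N j ≤ k) k.zero_le (hN₀.trans_le k.zero_le)
  exact (hN.monotone h).trans hle

lemma blockIndex_eq_iff (hN : StrictMono N) (hN₀ : N 0 = 0) {j k : ℕ} :
    blockIndex N k = j ↔ k ∈ Finset.Ico (N j) (N (j + 1)) := by
  rw [Finset.mem_Ico, gc_blockIndex hN hN₀ j k, ← not_le, gc_blockIndex hN hN₀ (j + 1) k]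
  omega

lemma exists_blockIndex_eq_and_succ (hN : StrictMono N) (hN₀ : N 0 = 0) (j : ℕ) :
    ∃ k, blockIndex N k = j ∧ blockIndex N (k + 1) = j + 1 := by
  have h₁ : N j < N (j + 1) := hN j.lt_succ_self
  have h₂ : N (j + 1) < N (j + 1 + 1) := hN (j + 1).lt_succ_self
  refine ⟨N (j + 1) - 1, ?_⟩
  simp only [blockIndex_eq_iff hN hN₀, Finset.mem_Ico]
  omega

lemma not_summable_div_comp_blockIndex (hN : StrictMono N) (hN₀ : N 0 = 0) {a c : ℕ → ℝ}
    (hc : ∀ j, 0 < c j) (hblock : ∀ j, c j ≤ ∑ k ∈ Finset.Ico (N j) (N (j + 1)), a k) :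
    ¬ Summable (fun k => a k / c (blockIndex N k)) := by
  intro hsum
  have hone (j : ℕ) : 1 ≤ ∑ k ∈ Finset.Ico (N j) (N (j + 1)), a k / c (blockIndex N k) :=
    calc 1 ≤ (∑ k ∈ Finset.Ico (N j) (N (j + 1)), a k) / c j := (one_le_div (hc j)).mpr (hblock j)
      _ = ∑ k ∈ Finset.Ico (N j) (N (j + 1)), a k / c (blockIndex N k) := by
        rw [Finset.sum_div]
        exact Finset.sum_congr rfl fun k hk => by rw [(blockIndex_eq_iff hN hN₀).mpr hk]
  exact zero_lt_one.not_ge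
    (ge_of_tendsto' (tendsto_sum_Ico_of_summable hsum hN.monotone hN.tendsto_atTop) hone)

end blockIndex

/-- The sequence `M` with `M 0 = 1` and quotients `M (n + 1) / M n = μ n`. -/
def seqOfQuotients (μ : ℕ → ℝ) (n : ℕ) : ℝ := ∏ i ∈ Finset.range n, μ i

section seqOfQuotients

variable {μ : ℕ → ℝ}

lemma seqOfQuotients_zero : seqOfQuotients μ 0 = 1 := Finset.prod_range_zero μ

lemma seqOfQuotients_succ (n : ℕ) : seqOfQuotients μ (n + 1) = seqOfQuotients μ n * μ n :=
  Finset.prod_range_succ μ n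

lemma seqOfQuotients_pos (hpos : ∀ k, 0 < μ k) (n : ℕ) : 0 < seqOfQuotients μ n :=
  Finset.prod_pos fun k _ => hpos k

lemma seqOfQuotients_succ_div (hpos : ∀ k, 0 < μ k) (n : ℕ) :
    seqOfQuotients μ (n + 1) / seqOfQuotients μ n = μ n := by
  rw [seqOfQuotients_succ, mul_div_cancel_left₀ _ (seqOfQuotients_pos hpos n).ne']

lemma monotone_seqOfQuotients (hone : ∀ k, 1 ≤ μ k) : Monotone (seqOfQuotients μ) := by
  refine monotone_nat_of_le_succ fun n => ?_
  rw [seqOfQuotients_succ]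
  exact le_mul_of_one_le_right
    (seqOfQuotients_pos (fun k => zero_lt_one.trans_le (hone k)) n).le (hone n)

lemma logConvexSeq_seqOfQuotients (hpos : ∀ k, 0 < μ k) (hμ : Monotone μ) :
    LogConvexSeq (seqOfQuotients μ) := by
  simpa only [LogConvexSeq, seqOfQuotients_succ_div hpos] using hμ

lemma seqOfQuotients_succ_le_pow (hpos : ∀ k, 0 < μ k) (hμ : Monotone μ) (n : ℕ) :
    seqOfQuotients μ (n + 1) ≤ μ n ^ (n + 1) :=
  calc seqOfQuotients μ (n + 1) ≤ ∏ _i ∈ Finset.range (n + 1), μ n :=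
        Finset.prod_le_prod (fun i _ => (hpos i).le) fun _ hi =>
          hμ (Finset.mem_range_succ_iff.mp hi)
    _ = μ n ^ (n + 1) := by rw [Finset.prod_const, Finset.card_range]

lemma seqOfQuotients_mul_pow_le (hpos : ∀ k, 0 < μ k) (hμ : Monotone μ) (m n : ℕ) :
    seqOfQuotients μ m * μ m ^ n ≤ seqOfQuotients μ (m + n) :=
  calc seqOfQuotients μ m * μ m ^ n = seqOfQuotients μ m * ∏ _i ∈ Finset.range n, μ m := by
        rw [Finset.prod_const, Finset.card_range]
    _ ≤ seqOfQuotients μ m * ∏ i ∈ Finset.range n, μ (m + i) :=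
        mul_le_mul_of_nonneg_left
          (Finset.prod_le_prod (fun _ _ => (hpos m).le) fun i _ => hμ (m.le_add_right i))
          (seqOfQuotients_pos hpos m).le
    _ = seqOfQuotients μ (m + n) := (Finset.prod_range_add μ m n).symm

lemma root_seqOfQuotients_two_mul_le (hpos : ∀ k, 0 < μ k) (hμ : Monotone μ) (k : ℕ) :
    seqOfQuotients μ (2 * (k + 1)) ^ (((k + 1 : ℕ) : ℝ)⁻¹) ≤ μ (2 * k + 1) ^ 2 := by
  refine rpow_inv_natCast_le_of_le_pow k.succ_ne_zero (seqOfQuotients_pos hpos _).le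
    (sq_nonneg _) ?_
  rw [← pow_mul]
  exact seqOfQuotients_succ_le_pow hpos hμ (2 * k + 1)

lemma root_sq_div_seqOfQuotients_le (hpos : ∀ k, 0 < μ k) (hμ : Monotone μ) (k : ℕ) :
    (seqOfQuotients μ (k + 1) ^ 2 / seqOfQuotients μ (2 * (k + 1))) ^ (((k + 1 : ℕ) : ℝ)⁻¹) ≤
      μ k / μ (k + 1) := by
  have hMpos := seqOfQuotients_pos hpos (k + 1)
  have hM₂pos := seqOfQuotients_pos hpos (2 * (k + 1))
  have hμpos := hpos (k + 1)
  refine rpow_inv_natCast_le_of_le_pow k.succ_ne_zero (by positivity)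
    (div_pos (hpos k) hμpos).le ?_
  rw [div_pow, div_le_div_iff₀ hM₂pos (by positivity)]
  calc seqOfQuotients μ (k + 1) ^ 2 * μ (k + 1) ^ (k + 1)
      = seqOfQuotients μ (k + 1) * (seqOfQuotients μ (k + 1) * μ (k + 1) ^ (k + 1)) := by ring
    _ ≤ μ k ^ (k + 1) * seqOfQuotients μ (2 * (k + 1)) := by
      rw [two_mul]
      exact mul_le_mul (seqOfQuotients_succ_le_pow hpos hμ k)
        (seqOfQuotients_mul_pow_le hpos hμ (k + 1) (k + 1)) (by positivity)
        (pow_nonneg (hpos k).le _)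

lemma root_seqOfQuotients_succ_div_le {B : ℝ} (hB : 1 ≤ B) (hpos : ∀ k, 0 < μ k)
    (hle : ∀ k, μ k ≤ B ^ k) (k : ℕ) :
    (seqOfQuotients μ (k + 1) / seqOfQuotients μ k) ^ ((k : ℝ)⁻¹) ≤ B := by
  rw [seqOfQuotients_succ_div hpos]
  rcases eq_or_ne k 0 with rfl | hk
  -- The exponent is the junk value `0⁻¹ = 0`.
  · simpa using hB
  · exact rpow_inv_natCast_le_of_le_pow hk (hpos k).le (zero_le_one.trans hB) (hle k)

lemma not_summable_shift_of_not_summable_quotients (hpos : ∀ k, 0 < μ k) (hμ : Monotone μ)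
    (hdiv : ¬ Summable (fun k : ℕ => 1 / ((k : ℝ) + 1) / μ k ^ 2)) :
    ¬ Summable (fun k : ℕ =>
      1 / (((k : ℝ) + 2) * seqOfQuotients μ (2 * (k + 1)) ^ (((k : ℝ) + 1)⁻¹))) := by
  have hanti : Antitone (fun k : ℕ => 1 / ((k : ℝ) + 1) / μ k ^ 2) := fun i j hij => by
    have := hpos i
    have := hμ hij
    dsimp only
    gcongr
  rw [← summable_comp_two_mul_add_one_iff hanti] at hdiv
  refine fun hsum => hdiv (hsum.of_nonneg_of_le (fun k => by positivity) fun k => ?_)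
  have hroot := root_seqOfQuotients_two_mul_le hpos hμ k
  have hMpos := seqOfQuotients_pos hpos (2 * (k + 1))
  push_cast at hroot ⊢
  have hk : (k : ℝ) + 2 ≤ 2 * k + 1 + 1 := by linarith [k.cast_nonneg (α := ℝ)]
  rw [div_div]
  exact one_div_le_one_div_of_le (by positivity)
    (mul_le_mul hk hroot (by positivity) (by positivity))

end seqOfQuotients

lemma exists_factorial_blocks :
    ∃ N : ℕ → ℕ, StrictMono N ∧ N 0 = 0 ∧
      ∀ j, ((j + 1).factorial : ℝ) ^ 2 ≤ ∑ k ∈ Finset.Ico (N j) (N (j + 1)), 1 / ((k : ℝ) + 1) := by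
  refine exists_strictMono_forall_le_sum_Ico (fun k => by positivity) ?_ _
  exact (not_summable_iff_tendsto_nat_atTop_of_nonneg fun k => by positivity).mpr
    Real.tendsto_sum_range_one_div_nat_succ_atTop

lemma sum_Ico_one_div_succ_le (m n : ℕ) :
    ∑ k ∈ Finset.Ico m n, 1 / ((k : ℝ) + 1) ≤ n :=
  calc ∑ k ∈ Finset.Ico m n, 1 / ((k : ℝ) + 1) ≤ ∑ _k ∈ Finset.Ico m n, (1 : ℝ) :=
        Finset.sum_le_sum fun k _ => div_le_one_of_le₀ (by simp) (by positivity)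
    _ ≤ n := by simp

lemma factorial_le_blockStart_add_one {N : ℕ → ℕ}
    (hblock : ∀ j,
      ((j + 1).factorial : ℝ) ^ 2 ≤ ∑ k ∈ Finset.Ico (N j) (N (j + 1)), 1 / ((k : ℝ) + 1)) :
    ∀ j, (j.factorial : ℝ) ≤ N j + 1
  | 0 => by simp
  | j + 1 => by
    have hone : (1 : ℝ) ≤ (j + 1).factorial := Nat.one_le_cast.mpr (j + 1).factorial_pos
    calc ((j + 1).factorial : ℝ) ≤ ((j + 1).factorial : ℝ) ^ 2 := le_self_pow₀ hone two_ne_zero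
      _ ≤ ∑ k ∈ Finset.Ico (N j) (N (j + 1)), 1 / ((k : ℝ) + 1) := hblock j
      _ ≤ N (j + 1) := sum_Ico_one_div_succ_le _ _
      _ ≤ N (j + 1) + 1 := (lt_add_one _).le

lemma exists_slow_monotone_with_large_jumps :
    ∃ μ : ℕ → ℝ, (∀ k, 1 ≤ μ k) ∧ Monotone μ ∧ (∀ k, μ k ≤ k + 1) ∧
      (¬ Summable (fun k : ℕ => 1 / ((k : ℝ) + 1) / μ k ^ 2)) ∧
      ∀ ε > 0, ∃ k, μ k / μ (k + 1) < ε := by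
  obtain ⟨N, hN, hN₀, hblock⟩ := exists_factorial_blocks
  have hgc := gc_blockIndex hN hN₀
  refine ⟨fun k => (blockIndex N k).factorial, fun k => ?_, fun i j hij => ?_, fun k => ?_, ?_,
    fun ε hε => ?_⟩
  · exact Nat.one_le_cast.mpr (blockIndex N k).factorial_pos
  · exact Nat.cast_le.mpr (Nat.factorial_le (hgc.monotone_u hij))
  · have hstart : (N (blockIndex N k) : ℝ) ≤ k := Nat.cast_le.mpr (hgc.l_u_le k)
    linarith [factorial_le_blockStart_add_one hblock (blockIndex N k)]
  · refine not_summable_div_comp_blockIndex (c := fun j => (j.factorial : ℝ) ^ 2) hN hN₀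
      (fun j => by positivity) fun j => le_trans ?_ (hblock j)
    gcongr
    exact j.le_succ
  · obtain ⟨j, hj⟩ := exists_nat_one_div_lt hε
    obtain ⟨k, hk, hk'⟩ := exists_blockIndex_eq_and_succ hN hN₀ j
    refine ⟨k, lt_of_eq_of_lt ?_ hj⟩
    dsimp only
    rw [hk, hk', Nat.factorial_succ]
    push_cast
    field_simp

/-- Proposition 1.3: there is a Denjoy-Carleman class `C_M` closed under differentiation
such that `C_{M^{(2)}}` is quasianalytic and `C_{M²} ⊊ C_{M^{(2)}}`.
The quasianalyticity condition `Σ_{k≥1} 1/((k+1) M_{2k}^{1/k}) = ∞` is written with the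
sum reindexed over `k ∈ ℕ` via `k ↦ k+1`. -/
theorem exists_class_with_square_ne_shift :
    ∃ M : ℕ → ℝ, (∀ k, 0 < M k) ∧ Monotone M ∧ M 0 = 1 ∧ LogConvexSeq M ∧
      (∃ B : ℝ, ∀ k : ℕ, (M (k + 1) / M k) ^ ((k : ℝ)⁻¹) ≤ B) ∧
      (¬ Summable (fun k : ℕ =>
        1 / (((k : ℝ) + 2) * M (2 * (k + 1)) ^ (((k : ℝ) + 1)⁻¹)))) ∧
      (∀ ε > (0 : ℝ), ∃ k : ℕ, 1 ≤ k ∧ (M k ^ 2 / M (2 * k)) ^ ((k : ℝ)⁻¹) < ε) := by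
  obtain ⟨μ, hone, hμ, hle, hdiv, hjump⟩ := exists_slow_monotone_with_large_jumps
  have hpos (k : ℕ) : 0 < μ k := zero_lt_one.trans_le (hone k)
  have hle_two_pow (k : ℕ) : μ k ≤ 2 ^ k :=
    (hle k).trans (by exact_mod_cast (Nat.lt_two_pow_self : k < 2 ^ k))
  refine ⟨seqOfQuotients μ, seqOfQuotients_pos hpos, monotone_seqOfQuotients hone,
    seqOfQuotients_zero, logConvexSeq_seqOfQuotients hpos hμ,
    ⟨2, root_seqOfQuotients_succ_div_le one_le_two hpos hle_two_pow⟩,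
    not_summable_shift_of_not_summable_quotients hpos hμ hdiv, fun ε hε => ?_⟩
  obtain ⟨k, hk⟩ := hjump ε hε
  exact ⟨k + 1, k.succ_pos, (root_sq_div_seqOfQuotients_le hpos hμ k).trans_lt hk⟩
end
end

section
/- Let M = (M_k) be a logarithmically convex sequence of positive real numbers with M_0 = 1. Then inf_{k≥1} (M_k²/M_{2k})^{1/k} > 0 (equivalently, C_{M²} = C_{M^{(2)}}) if and only if inf_{k≥1} M_k^{1+1/k}/M_{k+1} > 0. -/
/-!
Log-convexity makes each of the `k` ratios `M (i + 1) / M i`, `k ≤ i < 2 * k`, at least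
`M (k + 1) / M k`, so `(M (k + 1) / M k) ^ k ≤ M (2 * k) / M k`. Taking `k`-th roots bounds
the `k`-th term of the first infimum by the `k`-th term of the second.

Conversely, a lower bound `c ≤ 1` for the second infimum says that passing from `n` to `n + 1`
multiplies the root `M n ^ (1 / n)` by at most `(1 / c) ^ (1 / (n + 1))`, which for `n ≥ k` is at
most `(1 / c) ^ (1 / k)`. The `k` steps from `k` to `2 * k` together cost a factor of at most
`1 / c`, and so `c ^ 2` bounds the first infimum from below.
-/

open Real Filter Topology
open scoped Classical
noncomputable section
theorem LogConvexSeq.mul_ratio_pow_le {M : ℕ → ℝ} (hM : LogConvexSeq M) (hpos : ∀ k, 0 < M k)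
    (k j : ℕ) : M k * (M (k + 1) / M k) ^ j ≤ M (k + j) := by
  induction j with
  | zero => simp
  | succ j ih =>
    have ratio_le : M (k + 1) / M k ≤ M (k + j + 1) / M (k + j) := hM (Nat.le_add_right k j)
    have ratio_nonneg : 0 ≤ M (k + 1) / M k := (div_pos (hpos _) (hpos _)).le
    calc M k * (M (k + 1) / M k) ^ (j + 1)
        = M k * (M (k + 1) / M k) ^ j * (M (k + 1) / M k) := by rw [pow_succ, mul_assoc]
      _ ≤ M (k + j) * (M (k + j + 1) / M (k + j)) :=
        mul_le_mul ih ratio_le ratio_nonneg (hpos _).le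
      _ = M (k + (j + 1)) := mul_div_cancel₀ _ (hpos _).ne'

theorem LogConvexSeq.sq_div_rpow_inv_le {M : ℕ → ℝ} (hM : LogConvexSeq M) (hpos : ∀ k, 0 < M k)
    {k : ℕ} (hk : 1 ≤ k) :
    (M k ^ 2 / M (2 * k)) ^ ((k : ℝ)⁻¹) ≤ M k ^ (1 + (k : ℝ)⁻¹) / M (k + 1) := by
  have hk₀ : k ≠ 0 := Nat.one_le_iff_ne_zero.mp hk
  have hMk := hpos k
  have hMk₁ := hpos (k + 1)
  have hM₂k := hpos (2 * k)
  have pow_ratio_le : M k * (M (k + 1) / M k) ^ k ≤ M (2 * k) := by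
    simpa only [← two_mul] using hM.mul_ratio_pow_le hpos k k
  calc (M k ^ 2 / M (2 * k)) ^ ((k : ℝ)⁻¹)
      ≤ (M k ^ 2 / (M k * (M (k + 1) / M k) ^ k)) ^ ((k : ℝ)⁻¹) := by gcongr
    _ = (M k / (M (k + 1) / M k) ^ k) ^ ((k : ℝ)⁻¹) := by
      rw [sq, mul_div_mul_left _ _ hMk.ne']
    _ = M k ^ ((k : ℝ)⁻¹) / (M (k + 1) / M k) := by
      rw [div_rpow hMk.le (by positivity), pow_rpow_inv_natCast (by positivity) hk₀]
    _ = M k ^ (1 + (k : ℝ)⁻¹) / M (k + 1) := by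
      rw [rpow_one_add' hMk.le (by positivity), div_div_eq_mul_div, mul_comm]

theorem le_rpow_of_forall_mul_succ_le {M : ℕ → ℝ} (hM : ∀ k, 0 ≤ M k) {c : ℝ} (hc : 0 < c)
    (hc₁ : c ≤ 1) (h : ∀ k : ℕ, 1 ≤ k → c * M (k + 1) ≤ M k ^ (1 + (k : ℝ)⁻¹))
    {k : ℕ} (hk : 1 ≤ k) (j : ℕ) :
    M (k + j) ≤ (M k / c ^ j) ^ (((k + j : ℕ) : ℝ) / k) := by
  have hk₀ : (0 : ℝ) < k := Nat.cast_pos.mpr hk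
  induction j with
  | zero => simp [hk₀.ne']
  | succ j ih =>
    have hMk := hM k
    have exponent_mul : ((k + j : ℕ) : ℝ) / k * (1 + ((k + j : ℕ) : ℝ)⁻¹) =
        ((k + (j + 1) : ℕ) : ℝ) / k := by
      have : ((k + j : ℕ) : ℝ) ≠ 0 := by positivity
      push_cast at this ⊢
      field_simp
      ring
    have one_le_exponent : 1 ≤ ((k + (j + 1) : ℕ) : ℝ) / k := by
      rw [one_le_div hk₀]
      exact_mod_cast Nat.le_add_right k (j + 1)
    calc M (k + (j + 1))
        ≤ M (k + j) ^ (1 + ((k + j : ℕ) : ℝ)⁻¹) / c :=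
        (le_div_iff₀' hc).mpr (h (k + j) (hk.trans (Nat.le_add_right k j)))
      _ ≤ ((M k / c ^ j) ^ (((k + j : ℕ) : ℝ) / k)) ^ (1 + ((k + j : ℕ) : ℝ)⁻¹) / c := by
        gcongr
        exact hM _
      _ = (M k / c ^ j) ^ (((k + (j + 1) : ℕ) : ℝ) / k) / c := by
        rw [← rpow_mul (by positivity), exponent_mul]
      _ ≤ (M k / c ^ j) ^ (((k + (j + 1) : ℕ) : ℝ) / k) / c ^ (((k + (j + 1) : ℕ) : ℝ) / k) := by
        gcongr
        exact rpow_le_self_of_le_one hc.le hc₁ one_le_exponent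
      _ = (M k / c ^ (j + 1)) ^ (((k + (j + 1) : ℕ) : ℝ) / k) := by
        rw [← div_rpow (by positivity) hc.le, div_div, pow_succ]

theorem sq_le_sq_div_rpow_inv_of_forall_le {M : ℕ → ℝ} (hM : ∀ k, 0 < M k) {c : ℝ} (hc : 0 < c)
    (hc₁ : c ≤ 1) (h : ∀ k : ℕ, 1 ≤ k → c ≤ M k ^ (1 + (k : ℝ)⁻¹) / M (k + 1))
    {k : ℕ} (hk : 1 ≤ k) :
    c ^ 2 ≤ (M k ^ 2 / M (2 * k)) ^ ((k : ℝ)⁻¹) := by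
  have hk₀ : (0 : ℝ) < k := Nat.cast_pos.mpr hk
  have two_mul_le : M (2 * k) ≤ (M k / c ^ k) ^ 2 := by
    have exponent_eq : ((2 * k : ℕ) : ℝ) / k = (2 : ℕ) := by
      rw [Nat.cast_mul, mul_div_cancel_right₀ _ hk₀.ne']
    simpa only [← two_mul, exponent_eq, rpow_natCast] using
      le_rpow_of_forall_mul_succ_le (fun n ↦ (hM n).le) hc hc₁
        (fun n hn ↦ (le_div_iff₀ (hM _)).mp (h n hn)) hk k
  have sq_pow_le : (c ^ 2) ^ k ≤ M k ^ 2 / M (2 * k) := by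
    rw [div_pow, le_div_iff₀' (by positivity), pow_right_comm] at two_mul_le
    exact (le_div_iff₀ (hM _)).mpr two_mul_le
  calc c ^ 2 = ((c ^ 2) ^ k) ^ ((k : ℝ)⁻¹) :=
        (pow_rpow_inv_natCast (sq_nonneg c) (Nat.one_le_iff_ne_zero.mp hk)).symm
    _ ≤ (M k ^ 2 / M (2 * k)) ^ ((k : ℝ)⁻¹) := by gcongr

theorem square_eq_shift_iff_general (M : ℕ → ℝ) (hMpos : ∀ k, 0 < M k) (hMlc : LogConvexSeq M) :
    (∃ c > (0 : ℝ), ∀ k : ℕ, 1 ≤ k → c ≤ (M k ^ 2 / M (2 * k)) ^ ((k : ℝ)⁻¹)) ↔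
    (∃ c > (0 : ℝ), ∀ k : ℕ, 1 ≤ k → c ≤ M k ^ (1 + (k : ℝ)⁻¹) / M (k + 1)) := by
  constructor
  · rintro ⟨c, hc, h⟩
    exact ⟨c, hc, fun k hk ↦ (h k hk).trans (hMlc.sq_div_rpow_inv_le hMpos hk)⟩
  · rintro ⟨c, hc, h⟩
    have hmin : 0 < min c 1 := lt_min hc one_pos
    exact ⟨min c 1 ^ 2, pow_pos hmin 2, fun k hk ↦
      sq_le_sq_div_rpow_inv_of_forall_le hMpos hmin (min_le_right c 1)
        (fun n hn ↦ (min_le_left c 1).trans (h n hn)) hk⟩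

/-- Lemma 2.1: for a log-convex sequence `M` with `M₀ = 1`,
`inf_{k≥1} (M_k²/M_{2k})^{1/k} > 0` if and only if `inf_{k≥1} M_k^{1+1/k}/M_{k+1} > 0`. -/
theorem square_eq_shift_iff (M : ℕ → ℝ) (hMpos : ∀ k, 0 < M k)
    (hMlc : LogConvexSeq M) (hM0 : M 0 = 1) :
    (∃ c > (0 : ℝ), ∀ k : ℕ, 1 ≤ k → c ≤ (M k ^ 2 / M (2 * k)) ^ ((k : ℝ)⁻¹)) ↔
    (∃ c > (0 : ℝ), ∀ k : ℕ, 1 ≤ k → c ≤ M k ^ (1 + (k : ℝ)⁻¹) / M (k + 1)) :=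
  square_eq_shift_iff_general M hMpos hMlc
end
end

section
/- Let M = (M_k) be a logarithmically convex sequence of positive real numbers with M_0 = 1, and set m_k := M_{k+1}/M_k for k ∈ ℕ. Then for every k ∈ ℕ, the Ostrowski function φ_M satisfies φ_M(m_k) = m_k^{k+2}/M_k; equivalently, m_k^{k+2}/φ_M(m_k) = M_k, i.e., sup_{n≥0} m_k^{n+2}/M_n = m_k^{k+2}/M_k. -/
/-! Consecutive terms of `a n = r ^ (n + 2) / M n` have ratio `r / m_n`, so `a` is unimodal with
peak at `k` as soon as `r` separates the quotients `m_n`, `n < k`, from the `m_n`, `n ≥ k`. For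
nondecreasing `m` this holds for every `r` from `m_{k-1}` to `m_k`, in particular for `r = m_k`. -/

open Real Filter Topology
open scoped Classical
noncomputable section
section PowAddDiv

variable {K : Type*} [Field K] [LinearOrder K] [IsStrictOrderedRing K]
  {M : ℕ → K} {r : K} {k : ℕ}

lemma monotoneOn_pow_add_div (hM : ∀ n, 0 < M n) (hr : 0 ≤ r) (p : ℕ)
    (h : ∀ n < k, M (n + 1) / M n ≤ r) :
    MonotoneOn (fun n ↦ r ^ (n + p) / M n) (Set.Iic k) := by
  refine monotoneOn_of_le_succ Set.ordConnected_Iic fun n _ _ hn ↦ ?_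
  have hstep : M (n + 1) ≤ r * M n := (div_le_iff₀ (hM n)).mp (h n hn)
  rw [Nat.succ_eq_succ, div_le_div_iff₀ (hM n) (hM (n + 1))]
  calc r ^ (n + p) * M (n + 1) ≤ r ^ (n + p) * (r * M n) := by gcongr
    _ = r ^ (n + 1 + p) * M n := by ring

lemma antitoneOn_pow_add_div (hM : ∀ n, 0 < M n) (hr : 0 ≤ r) (p : ℕ)
    (h : ∀ n ≥ k, r ≤ M (n + 1) / M n) :
    AntitoneOn (fun n ↦ r ^ (n + p) / M n) (Set.Ici k) := by
  refine antitoneOn_of_succ_le Set.ordConnected_Ici fun n _ hn _ ↦ ?_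
  have hstep : r * M n ≤ M (n + 1) := (le_div_iff₀ (hM n)).mp (h n hn)
  rw [Nat.succ_eq_succ, div_le_div_iff₀ (hM (n + 1)) (hM n)]
  calc r ^ (n + 1 + p) * M n = r ^ (n + p) * (r * M n) := by ring
    _ ≤ r ^ (n + p) * M (n + 1) := by gcongr

end PowAddDiv

theorem ostrowski_at_mk_general {M : ℕ → ℝ} (hMpos : ∀ n, 0 < M n) {r : ℝ} (hr : 0 ≤ r) {k : ℕ}
    (hle : ∀ n < k, M (n + 1) / M n ≤ r) (hge : ∀ n ≥ k, r ≤ M (n + 1) / M n) :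
    ostrowski M r = r ^ (k + 2) / M k := by
  have hmax : IsMaxOn (fun n ↦ r ^ (n + 2) / M n) Set.univ k :=
    isMaxOn_univ_of_mono_anti (monotoneOn_pow_add_div hMpos hr 2 hle)
      (antitoneOn_pow_add_div hMpos hr 2 hge)
  have hgreatest : IsGreatest (Set.range fun n ↦ r ^ (n + 2) / M n) (r ^ (k + 2) / M k) :=
    ⟨Set.mem_range_self k, Set.forall_mem_range.mpr fun n ↦ hmax (Set.mem_univ n)⟩
  exact hgreatest.isLUB.ciSup_eq

/-- Lemma 3.1 (property of the Ostrowski function): with `m_k = M_{k+1}/M_k`,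
`φ_M(m_k) = sup_{n≥0} m_k^{n+2}/M_n = m_k^{k+2}/M_k`. -/
theorem ostrowski_at_mk (M : ℕ → ℝ) (hMpos : ∀ k, 0 < M k)
    (hMlc : LogConvexSeq M) (hM0 : M 0 = 1) :
    ∀ k : ℕ, ostrowski M (M (k + 1) / M k) = (M (k + 1) / M k) ^ (k + 2) / M k :=
  fun k ↦ ostrowski_at_mk_general hMpos (div_pos (hMpos (k + 1)) (hMpos k)).le
    (fun _ hn ↦ hMlc hn.le) (fun _ hn ↦ hMlc hn)
end
end

section
/- For every c > 0, every x = (x₁,x₂) ∈ ℝ², and every multi-index α = (α₁,α₂) ∈ ℕ², the function f(x) = 1/(c + x₁² + x₂²) satisfies |∂^α f(x)|/α! ≤ 8·8^{|α|}/(c + x₁² + x₂²)^{1+|α|/2}. -/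
/-!
Apply `∂₁ᵐ ∂₂ⁿ` to `q * f = 1`, where `q = c + x₁² + x₂²`. Since `q` is quadratic in each variable
and `∂₁∂₂q = 0`, only five terms of the Leibniz expansion survive, and for `(m, n) ≠ (0, 0)` the
derivatives `u(m,n) = ∂₁ᵐ∂₂ⁿf` satisfy

`q u(m,n) + 2 m x₁ u(m-1,n) + m (m-1) u(m-2,n) + 2 n x₂ u(m,n-1) + n (n-1) u(m,n-2) = 0`.

Put `s = √q`, so that `|x₁|, |x₂| ≤ s`. By strong induction on `m + n` this gives
`|u(m,n)| ≤ m! n! Bᵐ⁺ⁿ / sᵐ⁺ⁿ⁺²` as soon as `4 / B + 2 / B² ≤ 1`, in particular for `B = 8`.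
-/

open Real Filter Topology
open scoped Classical
noncomputable section
open scoped ContDiff Manifold

section Leibniz

variable {R A : Type*} [CommSemiring R] [CommSemiring A] [Algebra R A]

/-- The truncated exponents `m - 1` and `m - 2` are harmless: where truncation occurs, the
coefficient vanishes. -/
theorem derivation_iterate_mul_of_apply_apply_apply_eq_zero (D : Derivation R A A) {p : A}
    (hp : D (D (D p)) = 0) (g : A) (m : ℕ) :
    D^[m] (p * g) = p * D^[m] g + m • (D p * D^[m - 1] g)
      + m.choose 2 • (D (D p) * D^[m - 2] g) := by
  induction m with
  | zero => simp
  | succ m ih =>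
    rw [Function.iterate_succ_apply', ih]
    simp only [map_add, map_nsmul, Derivation.leibniz, hp, smul_eq_mul,
      ← Function.iterate_succ_apply' D]
    rcases m with _ | _ | m
    · simp [mul_comm g]
    · simp [Function.iterate_succ_apply', two_mul, mul_comm, add_assoc]
    · simp only [Nat.succ_eq_add_one, add_tsub_cancel_right, Nat.reduceSubDiff, nsmul_eq_mul,
        Nat.choose_succ_succ' (m + 2) 1, Nat.choose_one_right, Nat.cast_add]
      ring

theorem derivation_iterate_mul_of_apply_eq_zero (D : Derivation R A A) {p : A} (hp : D p = 0)
    (g : A) (m : ℕ) : D^[m] (p * g) = p * D^[m] g := by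
  rw [derivation_iterate_mul_of_apply_apply_apply_eq_zero D (by simp [hp])]
  simp [hp]

theorem derivation_iterate_mul_of_apply_apply_eq_two (D : Derivation R A A) {p : A}
    (hp : D (D p) = 2) (g : A) (m : ℕ) :
    D^[m] (p * g) = p * D^[m] g + m • (D p * D^[m - 1] g) + m.descFactorial 2 • D^[m - 2] g := by
  have hp' : D (D (D p)) = 0 := by simpa [hp] using D.map_natCast 2
  rw [derivation_iterate_mul_of_apply_apply_apply_eq_zero D hp',
    Nat.descFactorial_eq_factorial_mul_choose, hp, Nat.factorial_two]
  simp only [nsmul_eq_mul, Nat.cast_mul, Nat.cast_ofNat]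
  ring

theorem derivation_iterate_iterate_one_eq_zero (D₁ D₂ : Derivation R A A) {m n : ℕ}
    (hmn : (m, n) ≠ (0, 0)) : D₁^[m] (D₂^[n] 1) = 0 := by
  rcases n with _ | n
  · obtain ⟨m, rfl⟩ := Nat.exists_eq_succ_of_ne_zero (show m ≠ 0 by simpa using hmn)
    simp [Function.iterate_succ_apply]
  · simp [Function.iterate_succ_apply]

theorem iterate_derivations_recurrence_of_mul_eq_one (D₁ D₂ : Derivation R A A) {q f : A}
    (h₁ : D₁ (D₁ q) = 2) (h₂ : D₂ (D₂ q) = 2) (h₁₂ : D₁ (D₂ q) = 0) (hqf : q * f = 1) {m n : ℕ}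
    (hmn : (m, n) ≠ (0, 0)) :
    q * D₁^[m] (D₂^[n] f)
      + m • (D₁ q * D₁^[m - 1] (D₂^[n] f)) + m.descFactorial 2 • D₁^[m - 2] (D₂^[n] f)
      + n • (D₂ q * D₁^[m] (D₂^[n - 1] f)) + n.descFactorial 2 • D₁^[m] (D₂^[n - 2] f) = 0 := by
  rw [← derivation_iterate_iterate_one_eq_zero D₁ D₂ hmn, ← hqf,
    derivation_iterate_mul_of_apply_apply_eq_two D₂ h₂]
  simp only [iterate_map_add, iterate_map_nsmul,
    derivation_iterate_mul_of_apply_apply_eq_two D₁ h₁,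
    derivation_iterate_mul_of_apply_eq_zero D₁ h₁₂]

end Leibniz

section Majorant

/-- The bound `m! n! Bᵐ⁺ⁿ / sᵐ⁺ⁿ⁺²` for the derivative of order `(m, n)` of `1 / q` at a point where
`q = s²`. -/
def majorant (B s : ℝ) (m n : ℕ) : ℝ :=
  m.factorial * n.factorial * B ^ (m + n) / s ^ (m + n + 2)

theorem majorant_comm (B s : ℝ) (m n : ℕ) : majorant B s m n = majorant B s n m := by
  simp only [majorant, add_comm m n, mul_comm (m.factorial : ℝ)]

variable {B s : ℝ}

theorem majorant_nonneg (hB : 0 ≤ B) (hs : 0 ≤ s) (m n : ℕ) : 0 ≤ majorant B s m n := by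
  unfold majorant
  positivity

theorem descFactorial_mul_majorant_sub_le (hB : 0 < B) (hs : 0 < s) (j m n : ℕ) :
    m.descFactorial j * majorant B s (m - j) n ≤ (s / B) ^ j * majorant B s m n := by
  rcases lt_or_ge m j with hmj | hjm
  · rw [Nat.descFactorial_of_lt hmj, Nat.cast_zero, zero_mul]
    exact mul_nonneg (by positivity) (majorant_nonneg hB.le hs.le m n)
  · obtain ⟨i, rfl⟩ := Nat.exists_eq_add_of_le hjm
    have hfact : ((j + i).factorial : ℝ) = i.factorial * (j + i).descFactorial j := by
      exact_mod_cast (by simpa using (Nat.factorial_mul_descFactorial hjm).symm)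
    rw [Nat.add_sub_cancel_left, majorant, majorant, hfact, div_pow]
    apply le_of_eq
    field_simp
    ring

theorem descFactorial_mul_abs_sub_le (hB : 0 < B) (hs : 0 < s) {v : ℕ → ℝ} {j m n : ℕ}
    (hv : j ≤ m → |v (m - j)| ≤ majorant B s (m - j) n) :
    |m.descFactorial j * v (m - j)| ≤ (s / B) ^ j * majorant B s m n := by
  refine le_trans ?_ (descFactorial_mul_majorant_sub_le hB hs j m n)
  rw [abs_mul, Nat.abs_cast]
  rcases lt_or_ge m j with hmj | hjm
  · simp [Nat.descFactorial_of_lt hmj]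
  · gcongr
    exact hv hjm

theorem abs_le_of_linear_relation {u K p₁ p₂ a₁ a₂ b₁ b₂ : ℝ} (hB : 0 < B)
    (hB' : 4 * B + 2 ≤ B ^ 2) (hs : 0 < s) (hK : 0 ≤ K) (hp₁ : |p₁| ≤ 2 * s) (hp₂ : |p₂| ≤ 2 * s)
    (ha₁ : |a₁| ≤ s / B * K) (hb₁ : |b₁| ≤ (s / B) ^ 2 * K)
    (ha₂ : |a₂| ≤ s / B * K) (hb₂ : |b₂| ≤ (s / B) ^ 2 * K)
    (hu : s ^ 2 * u + (p₁ * a₁ + b₁ + (p₂ * a₂ + b₂)) = 0) :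
    |u| ≤ K := by
  have hB_ratio : 4 / B + 2 / B ^ 2 ≤ 1 := by
    rw [div_add_div _ _ (by positivity) (by positivity), div_le_one (by positivity)]
    nlinarith
  have abs_add_le_of_le {p a b : ℝ} (hp : |p| ≤ 2 * s) (ha : |a| ≤ s / B * K)
      (hb : |b| ≤ (s / B) ^ 2 * K) : |p * a + b| ≤ 2 * s * (s / B * K) + (s / B) ^ 2 * K := by
    grw [abs_add_le, abs_mul, hp, ha, hb]
  refine le_of_mul_le_mul_left ?_ (pow_pos hs 2)
  calc s ^ 2 * |u|
      = |p₁ * a₁ + b₁ + (p₂ * a₂ + b₂)| := by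
        rw [← abs_of_pos (pow_pos hs 2), ← abs_mul, eq_neg_of_add_eq_zero_left hu, abs_neg]
    _ ≤ 2 * s * (s / B * K) + (s / B) ^ 2 * K + (2 * s * (s / B * K) + (s / B) ^ 2 * K) := by
        grw [abs_add_le, abs_add_le_of_le hp₁ ha₁ hb₁, abs_add_le_of_le hp₂ ha₂ hb₂]
    _ = (4 / B + 2 / B ^ 2) * (s ^ 2 * K) := by
        field_simp
        ring
    _ ≤ s ^ 2 * K := mul_le_of_le_one_left (by positivity) hB_ratio

theorem abs_le_majorant_of_recurrence {u : ℕ → ℕ → ℝ} {p₁ p₂ : ℝ} (hB : 0 < B)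
    (hB' : 4 * B + 2 ≤ B ^ 2) (hs : 0 < s) (hp₁ : |p₁| ≤ 2 * s) (hp₂ : |p₂| ≤ 2 * s)
    (h₀ : s ^ 2 * u 0 0 = 1)
    (hu : ∀ m n, (m, n) ≠ (0, 0) → s ^ 2 * u m n
      + m * (p₁ * u (m - 1) n) + m.descFactorial 2 * u (m - 2) n
      + n * (p₂ * u m (n - 1)) + n.descFactorial 2 * u m (n - 2) = 0) (m n : ℕ) :
    |u m n| ≤ majorant B s m n := by
  induction hk : m + n using Nat.strong_induction_on generalizing m n with
  | _ k ih =>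
  subst hk
  by_cases hmn : (m, n) = (0, 0)
  · obtain ⟨rfl, rfl⟩ := Prod.mk.inj hmn
    simp [majorant, eq_inv_of_mul_eq_one_right h₀]
  set K := majorant B s m n with hK
  have bound_left (j : ℕ) (hj : 0 < j) :
      |m.descFactorial j * u (m - j) n| ≤ (s / B) ^ j * K :=
    descFactorial_mul_abs_sub_le (v := fun i => u i n) hB hs fun hjm => ih _ (by lia) _ _ rfl
  have bound_right (j : ℕ) (hj : 0 < j) :
      |n.descFactorial j * u m (n - j)| ≤ (s / B) ^ j * K := by
    rw [hK, majorant_comm]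
    exact descFactorial_mul_abs_sub_le (v := u m) hB hs fun hjn =>
      (ih _ (by lia) _ _ rfl).trans_eq (majorant_comm ..)
  have hm₁ := bound_left 1 one_pos
  have hm₂ := bound_left 2 two_pos
  have hn₁ := bound_right 1 one_pos
  have hn₂ := bound_right 2 two_pos
  rw [Nat.descFactorial_one, pow_one] at hm₁ hn₁
  exact abs_le_of_linear_relation hB hB' hs (majorant_nonneg hB.le hs.le m n) hp₁ hp₂ hm₁ hm₂ hn₁
    hn₂ (by linarith [hu m n hmn])

end Majorant

section LineDerivation

variable {𝕜 E : Type*} [NontriviallyNormedField 𝕜] [NormedAddCommGroup E] [NormedSpace 𝕜 E]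

theorem differentiable_contMDiffMap (f : C^∞⟮𝓘(𝕜, E), E; 𝕜⟯) : Differentiable 𝕜 f :=
  f.contMDiff.contDiff.differentiable (by simp)

/-- Differentiation in the constant direction `v`, as a derivation of the algebra of smooth
functions. -/
def lineDerivation (v : E) :
    Derivation 𝕜 C^∞⟮𝓘(𝕜, E), E; 𝕜⟯ C^∞⟮𝓘(𝕜, E), E; 𝕜⟯ :=
  Derivation.mk'
    { toFun f := ⟨fun x => fderiv 𝕜 f x v,
        ((f.contMDiff.contDiff.fderiv_right (m := ∞) (by simp)).clm_apply
          contDiff_const).contMDiff⟩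
      map_add' f g := ContMDiffMap.ext fun x => DFunLike.congr_fun
        (fderiv_add (differentiable_contMDiffMap f x) (differentiable_contMDiffMap g x)) v
      map_smul' a f := ContMDiffMap.ext fun x => DFunLike.congr_fun
        (fderiv_const_smul (differentiable_contMDiffMap f x) a) v }
    fun f g => ContMDiffMap.ext fun x => DFunLike.congr_fun
      (fderiv_mul (differentiable_contMDiffMap f x) (differentiable_contMDiffMap g x)) v

theorem coe_lineDerivation (v : E) (f : C^∞⟮𝓘(𝕜, E), E; 𝕜⟯) :
    ⇑(lineDerivation v f) = fun x => fderiv 𝕜 f x v :=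
  rfl

theorem lineDerivation_coe_continuousLinearMap (v : E) (l : E →L[𝕜] 𝕜) :
    lineDerivation v (l : C^∞⟮𝓘(𝕜, E), E; 𝕜⟯) = algebraMap 𝕜 _ (l v) := by
  ext x
  exact DFunLike.congr_fun l.fderiv v

theorem coe_iterate_lineDerivation (m n : ℕ) (f : C^∞⟮𝓘(ℝ, ℝ × ℝ), ℝ × ℝ; ℝ⟯) :
    ⇑((lineDerivation (1, 0))^[m] ((lineDerivation (0, 1))^[n] f)) = pd (m, n) f := by
  have semiconj₁ : Function.Semiconj (fun g : C^∞⟮𝓘(ℝ, ℝ × ℝ), ℝ × ℝ; ℝ⟯ => ⇑g)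
      (lineDerivation (𝕜 := ℝ) (1, 0)) pd1 := coe_lineDerivation _
  have semiconj₂ : Function.Semiconj (fun g : C^∞⟮𝓘(ℝ, ℝ × ℝ), ℝ × ℝ; ℝ⟯ => ⇑g)
      (lineDerivation (𝕜 := ℝ) (0, 1)) pd2 := coe_lineDerivation _
  exact ((semiconj₁.iterate_right m).eq _).trans
    (congrArg pd1^[m] ((semiconj₂.iterate_right n).eq f))

end LineDerivation

section Quadric

/-- The denominator `c + x₁² + x₂²`, as an element of the algebra of smooth functions on the
plane. -/
def quadric (c : ℝ) : C^∞⟮𝓘(ℝ, ℝ × ℝ), ℝ × ℝ; ℝ⟯ :=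
  ⟨fun x => c + x.1 ^ 2 + x.2 ^ 2, ContDiff.contMDiff (by fun_prop)⟩

theorem lineDerivation_quadric (c : ℝ) (v : ℝ × ℝ) :
    lineDerivation v (quadric c)
      = ((2 * v.1) • ContinuousLinearMap.fst ℝ ℝ ℝ + (2 * v.2) • ContinuousLinearMap.snd ℝ ℝ ℝ :
        ℝ × ℝ →L[ℝ] ℝ) := by
  ext x
  have hfst := (hasFDerivAt_fst (𝕜 := ℝ) (p := x)).pow 2
  have hsnd := (hasFDerivAt_snd (𝕜 := ℝ) (p := x)).pow 2
  refine (DFunLike.congr_fun ((hfst.const_add c).add hsnd).fderiv v).trans ?_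
  simp [mul_right_comm]

theorem lineDerivation_lineDerivation_quadric (c : ℝ) (v w : ℝ × ℝ) :
    lineDerivation w (lineDerivation v (quadric c))
      = algebraMap ℝ _ (2 * v.1 * w.1 + 2 * v.2 * w.2) := by
  rw [lineDerivation_quadric, lineDerivation_coe_continuousLinearMap]
  simp

theorem pd_recurrence_of_quadric_mul_eq_one {c : ℝ} {f : C^∞⟮𝓘(ℝ, ℝ × ℝ), ℝ × ℝ; ℝ⟯}
    (hf : quadric c * f = 1) (x : ℝ × ℝ) {m n : ℕ} (hmn : (m, n) ≠ (0, 0)) :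
    (c + x.1 ^ 2 + x.2 ^ 2) * pd (m, n) f x
      + m * (2 * x.1 * pd (m - 1, n) f x) + m.descFactorial 2 * pd (m - 2, n) f x
      + n * (2 * x.2 * pd (m, n - 1) f x) + n.descFactorial 2 * pd (m, n - 2) f x = 0 := by
  have hrec := iterate_derivations_recurrence_of_mul_eq_one
    (lineDerivation (1, 0)) (lineDerivation (0, 1))
    (by simp [lineDerivation_lineDerivation_quadric, map_ofNat])
    (by simp [lineDerivation_lineDerivation_quadric, map_ofNat])
    (by simp [lineDerivation_lineDerivation_quadric]) hf hmn
  have h_fst : lineDerivation (1, 0) (quadric c) x = 2 * x.1 := by simp [lineDerivation_quadric]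
  have h_snd : lineDerivation (0, 1) (quadric c) x = 2 * x.2 := by simp [lineDerivation_quadric]
  simp only [← Nat.cast_smul_eq_nsmul ℝ] at hrec
  simp only [← h_fst, ← h_snd, ← coe_iterate_lineDerivation]
  exact DFunLike.congr_fun hrec x

theorem abs_pd_one_div_le {B c : ℝ} (hB : 0 < B) (hB' : 4 * B + 2 ≤ B ^ 2) (hc : 0 < c)
    (x : ℝ × ℝ) (m n : ℕ) :
    |pd (m, n) (fun y : ℝ × ℝ => 1 / (c + y.1 ^ 2 + y.2 ^ 2)) x|
      ≤ majorant B √(c + x.1 ^ 2 + x.2 ^ 2) m n := by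
  have hpos (y : ℝ × ℝ) : 0 < c + y.1 ^ 2 + y.2 ^ 2 := by positivity
  let f : C^∞⟮𝓘(ℝ, ℝ × ℝ), ℝ × ℝ; ℝ⟯ :=
    ⟨fun y => 1 / (c + y.1 ^ 2 + y.2 ^ 2),
      (contDiff_const.div (by fun_prop) fun y => (hpos y).ne').contMDiff⟩
  have hf : quadric c * f = 1 := ContMDiffMap.ext fun y => mul_one_div_cancel (hpos y).ne'
  have hsq : √(c + x.1 ^ 2 + x.2 ^ 2) ^ 2 = c + x.1 ^ 2 + x.2 ^ 2 := sq_sqrt (hpos x).le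
  have hx₁ : |x.1| ≤ √(c + x.1 ^ 2 + x.2 ^ 2) := abs_le_sqrt (by linarith [sq_nonneg x.2])
  have hx₂ : |x.2| ≤ √(c + x.1 ^ 2 + x.2 ^ 2) := abs_le_sqrt (by linarith [sq_nonneg x.1])
  refine abs_le_majorant_of_recurrence (u := fun m n => pd (m, n) f x) (p₁ := 2 * x.1)
    (p₂ := 2 * x.2) hB hB' (sqrt_pos.2 (hpos x)) ?_ ?_ ?_ ?_ m n
  · grw [abs_mul, abs_two, hx₁]
  · grw [abs_mul, abs_two, hx₂]
  · rw [hsq]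
    exact DFunLike.congr_fun hf x
  · intro m n hmn
    rw [hsq]
    exact pd_recurrence_of_quadric_mul_eq_one hf x hmn

end Quadric

/-- Lemma 3.3 (a priori estimate): for `c > 0` and `f(x) = 1/(c + x₁² + x₂²)`,
`|∂^α f(x)|/α! ≤ 8·8^{|α|}/(c + x₁² + x₂²)^{1+|α|/2}`. -/
theorem apriori_estimate (c : ℝ) (hc : 0 < c) (x : ℝ × ℝ) (α : ℕ × ℕ) :
    |pd α (fun y : ℝ × ℝ => 1 / (c + y.1 ^ 2 + y.2 ^ 2)) x| /
      (Nat.factorial α.1 * Nat.factorial α.2) ≤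
    8 * 8 ^ (α.1 + α.2) / (c + x.1 ^ 2 + x.2 ^ 2) ^ (1 + ((α.1 + α.2 : ℕ) : ℝ) / 2) := by
  obtain ⟨m, n⟩ := α
  set q := c + x.1 ^ 2 + x.2 ^ 2
  have hq : 0 < q := by positivity
  have hpow : q ^ (1 + ((m + n : ℕ) : ℝ) / 2) = √q ^ (m + n + 2) := by
    rw [sqrt_eq_rpow, ← rpow_mul_natCast hq.le]
    congr 1
    push_cast
    ring
  calc |pd (m, n) (fun y : ℝ × ℝ => 1 / (c + y.1 ^ 2 + y.2 ^ 2)) x| /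
        (m.factorial * n.factorial)
      ≤ majorant 8 √q m n / (m.factorial * n.factorial) := by
        gcongr
        exact abs_pd_one_div_le (by norm_num) (by norm_num) hc x m n
    _ = 8 ^ (m + n) / q ^ (1 + ((m + n : ℕ) : ℝ) / 2) := by
        rw [hpow, majorant]
        field_simp
    _ ≤ 8 * 8 ^ (m + n) / q ^ (1 + ((m + n : ℕ) : ℝ) / 2) := by
        gcongr
        exact le_mul_of_one_le_left (by positivity) (by norm_num)
end
end

section
/- Let M = (M_k) be a nondecreasing logarithmically convex sequence of positive real numbers with M_0 = 1. Then there exists a C^∞ function h : ℝ² → ℝ such that: (i) for every x = (x₁,x₂) ∈ ℝ² and every multi-index α = (α₁,α₂) ∈ ℕ², |∂^α h(x)| ≤ 64·8^{|α|+1}·α!·M_{α₂}/(1 + x₁² + x₂²)^{1+|α|/2}; and (ii) for every n ∈ ℕ, |∂^{2n}h/∂x₂^{2n}(0,0)| ≥ (2n)!·M_{2n}/2^{2n}. -/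
/-!
With `m k = M (k + 1) / M k`, the function is `h = ∑ 2⁻ᵏ * (M k / m k ^ k) * g (m k)`, where
`g m x = 1 / (1 + x₁² + m² x₂²)`. Differentiating `Q * g m = 1`, with `Q` the denominator of `g m`,
expresses each derivative of `g m` through those of order one or two less, in `x₁` or in `x₂`; by
induction this gives Cauchy estimates with radius `√Q / 8` in `x₁` and `√Q / (8 m)` in `x₂`.

Log-convexity says that `j ↦ M j / m k ^ j` is minimal at `j = k`. Hence the `k`-th coefficient
times `m k ^ j` is at most `2⁻ᵏ * M j`, which makes all differentiated series converge uniformly and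
gives the upper bound, and there is equality at `j = k`. At the origin the terms of the series for
`∂₂^(2n) h` all have the sign `(-1)^n`, so the term `k = 2n` alone gives the lower bound.
-/

open Real Filter Topology
open scoped Classical
noncomputable section
open scoped ContDiff Nat

section DirectionalDerivative

variable {E F : Type*} [NormedAddCommGroup E] [NormedSpace ℝ E] [NormedAddCommGroup F]
  [NormedSpace ℝ F] {f g : E → F}

/-- The derivative of `f` in the fixed direction `v`, as a function of the base point. It is built
on `fderiv`, not on Mathlib's `lineDeriv`, so that `pd1` and `pd2` are definitionally the cases
`v = (1, 0)` and `v = (0, 1)`. -/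
def dirDeriv (v : E) (f : E → F) : E → F := fun x => fderiv ℝ f x v

lemma contDiff_dirDeriv (hf : ContDiff ℝ ∞ f) (v : E) : ContDiff ℝ ∞ (dirDeriv v f) :=
  (hf.fderiv_right (m := ∞) (by norm_cast)).clm_apply contDiff_const

lemma contDiff_iterate_dirDeriv (hf : ContDiff ℝ ∞ f) (v : E) (n : ℕ) :
    ContDiff ℝ ∞ ((dirDeriv v)^[n] f) := by
  induction n with
  | zero => exact hf
  | succ n ih => rw [Function.iterate_succ_apply']; exact contDiff_dirDeriv ih v

lemma dirDeriv_comm (hf : ContDiff ℝ ∞ f) (v w : E) :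
    dirDeriv v (dirDeriv w f) = dirDeriv w (dirDeriv v f) := by
  have hderiv : Differentiable ℝ (fderiv ℝ f) :=
    (hf.fderiv_right (m := ∞) (by norm_cast)).differentiable (by simp)
  have hsecond (v w x : E) : dirDeriv v (dirDeriv w f) x = fderiv ℝ (fderiv ℝ f) x v w := by
    change fderiv ℝ (fun y => fderiv ℝ f y w) x v = _
    simp [fderiv_clm_apply (hderiv x) (differentiableAt_const w)]
  funext x
  rw [hsecond, hsecond]
  exact ((contDiff_infty.1 hf 2).contDiffAt.isSymmSndFDerivAt (by simp)).eq v w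

lemma dirDeriv_iterate_dirDeriv_comm (hf : ContDiff ℝ ∞ f) (v w : E) (n : ℕ) :
    dirDeriv v ((dirDeriv w)^[n] f) = (dirDeriv w)^[n] (dirDeriv v f) := by
  induction n with
  | zero => rfl
  | succ n ih =>
    rw [Function.iterate_succ_apply', Function.iterate_succ_apply',
      dirDeriv_comm (contDiff_iterate_dirDeriv hf w n), ih]

lemma iterate_dirDeriv_add (hf : ContDiff ℝ ∞ f) (hg : ContDiff ℝ ∞ g) (v : E) (n : ℕ) :
    (dirDeriv v)^[n] (f + g) = (dirDeriv v)^[n] f + (dirDeriv v)^[n] g := by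
  induction n with
  | zero => rfl
  | succ n ih =>
    funext x
    simp only [Function.iterate_succ_apply', ih, dirDeriv, Pi.add_apply]
    rw [fderiv_add ((contDiff_iterate_dirDeriv hf v n).differentiable (by simp) x)
      ((contDiff_iterate_dirDeriv hg v n).differentiable (by simp) x), add_apply]

lemma iterate_dirDeriv_const_smul (c : ℝ) (f : E → F) (v : E) (n : ℕ) :
    (dirDeriv v)^[n] (c • f) = c • (dirDeriv v)^[n] f := by
  induction n with
  | zero => rfl
  | succ n ih =>
    funext x
    simp only [Function.iterate_succ_apply', ih, dirDeriv, fderiv_const_smul_field, Pi.smul_apply,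
      smul_apply]

lemma iterate_dirDeriv_zero (v : E) (n : ℕ) : (dirDeriv v)^[n] (0 : E → F) = 0 :=
  Function.iterate_fixed (by funext x; simp [dirDeriv]) n

lemma iterate_dirDeriv_const {n : ℕ} (hn : n ≠ 0) (c : F) (v : E) :
    (dirDeriv v)^[n] (fun _ => c) = 0 := by
  obtain ⟨n, rfl⟩ := Nat.exists_eq_succ_of_ne_zero hn
  have hconst : dirDeriv v (fun _ => c) = 0 := by funext x; simp [dirDeriv]
  rw [Function.iterate_succ_apply, hconst, iterate_dirDeriv_zero]

/-- At `n = 0` the truncated index `n - 1` is harmless because its coefficient vanishes. -/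
lemma iterate_dirDeriv_clm_smul (ℓ : E →L[ℝ] ℝ) (hf : ContDiff ℝ ∞ f) (v : E) (n : ℕ) :
    (dirDeriv v)^[n] (fun x => ℓ x • f x) =
      fun x => ℓ x • (dirDeriv v)^[n] f x + (n * ℓ v) • (dirDeriv v)^[n - 1] f x := by
  have hdiff (k : ℕ) : Differentiable ℝ ((dirDeriv v)^[k] f) :=
    (contDiff_iterate_dirDeriv hf v k).differentiable (by simp)
  induction n with
  | zero => simp
  | succ n ih =>
    funext x
    have hproduct := (ℓ.hasFDerivAt (x := x)).smul (hdiff n x).hasFDerivAt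
    have hlower := (hdiff (n - 1) x).hasFDerivAt.const_smul (n * ℓ v)
    have hsum : (dirDeriv v)^[n + 1] (fun x => ℓ x • f x) x =
        ℓ x • (dirDeriv v)^[n + 1] f x + ℓ v • (dirDeriv v)^[n] f x +
          (n * ℓ v) • dirDeriv v ((dirDeriv v)^[n - 1] f) x := by
      rw [Function.iterate_succ_apply', ih, Function.iterate_succ_apply']
      exact congrArg (fun L => L v) (hproduct.add hlower).fderiv
    rw [hsum]
    cases n with
    | zero => simp
    | succ n =>
      rw [Nat.add_sub_cancel, Nat.add_sub_cancel, ← Function.iterate_succ_apply' (dirDeriv v) n]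
      push_cast
      module

lemma dirDeriv_tsum {ι : Type*} [CompleteSpace F] {f : ι → E → F} {u : ι → ℝ} (hu : Summable u)
    (hf : ∀ k, Differentiable ℝ (f k)) (hfu : ∀ k x, ‖fderiv ℝ (f k) x‖ ≤ u k) {x₀ : E}
    (hx₀ : Summable fun k => f k x₀) (v : E) :
    dirDeriv v (fun x => ∑' k, f k x) = fun x => ∑' k, dirDeriv v (f k) x := by
  funext x
  rw [dirDeriv, fderiv_tsum_apply hu hf hfu hx₀]
  exact (ContinuousLinearMap.apply ℝ F v).map_tsum (.of_norm_bounded hu fun k => hfu k x)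

end DirectionalDerivative

section PartialDerivative

variable {f g : ℝ × ℝ → ℝ}

lemma contDiff_pd (hf : ContDiff ℝ ∞ f) (α : ℕ × ℕ) : ContDiff ℝ ∞ (pd α f) :=
  contDiff_iterate_dirDeriv (contDiff_iterate_dirDeriv hf _ _) _ _

lemma differentiable_pd (hf : ContDiff ℝ ∞ f) (α : ℕ × ℕ) : Differentiable ℝ (pd α f) :=
  (contDiff_pd hf α).differentiable (by simp)

lemma pd_succ_left (i j : ℕ) (f : ℝ × ℝ → ℝ) : pd (i + 1, j) f = pd1 (pd (i, j) f) :=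
  Function.iterate_succ_apply' pd1 i _

lemma pd_zero_succ (j : ℕ) (f : ℝ × ℝ → ℝ) : pd (0, j + 1) f = pd2 (pd (0, j) f) :=
  Function.iterate_succ_apply' pd2 j f

lemma pd_succ_right (hf : ContDiff ℝ ∞ f) (i j : ℕ) : pd (i, j + 1) f = pd2 (pd (i, j) f) := by
  change pd1^[i] (pd2^[j + 1] f) = pd2 (pd1^[i] (pd2^[j] f))
  rw [Function.iterate_succ_apply']
  exact (dirDeriv_iterate_dirDeriv_comm (contDiff_iterate_dirDeriv hf (0, 1) j) _ _ _).symm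

lemma pd_add (hf : ContDiff ℝ ∞ f) (hg : ContDiff ℝ ∞ g) (α : ℕ × ℕ) :
    pd α (f + g) = pd α f + pd α g :=
  (congrArg _ (iterate_dirDeriv_add hf hg _ _)).trans <|
    iterate_dirDeriv_add (contDiff_iterate_dirDeriv hf _ _) (contDiff_iterate_dirDeriv hg _ _) _ _

lemma pd_const_smul (c : ℝ) (f : ℝ × ℝ → ℝ) (α : ℕ × ℕ) : pd α (c • f) = c • pd α f :=
  (congrArg _ (iterate_dirDeriv_const_smul c f _ _)).trans (iterate_dirDeriv_const_smul c _ _ _)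

lemma pd_const {α : ℕ × ℕ} (hα : α ≠ 0) (c : ℝ) : pd α (fun _ => c) = 0 := by
  obtain ⟨i, j⟩ := α
  by_cases hj : j = 0
  · subst hj
    exact iterate_dirDeriv_const (by simpa using hα) c _
  · exact (congrArg _ (iterate_dirDeriv_const hj c _)).trans (iterate_dirDeriv_zero _ i)

lemma pd_fst_mul (hf : ContDiff ℝ ∞ f) (i j : ℕ) (x : ℝ × ℝ) :
    pd (i, j) (fun y => y.1 * f y) x = x.1 * pd (i, j) f x + i * pd (i - 1, j) f x := by
  have hinner := iterate_dirDeriv_clm_smul (.fst ℝ ℝ ℝ) hf (0, 1) j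
  have houter := iterate_dirDeriv_clm_smul (.fst ℝ ℝ ℝ)
    (contDiff_iterate_dirDeriv hf (0, 1) j) (1, 0) i
  simp only [ContinuousLinearMap.coe_fst', smul_eq_mul, mul_zero, zero_mul, add_zero,
    mul_one] at hinner houter
  exact congrFun ((congrArg _ hinner).trans houter) x

lemma pd_snd_mul (hf : ContDiff ℝ ∞ f) (i j : ℕ) (x : ℝ × ℝ) :
    pd (i, j) (fun y => y.2 * f y) x = x.2 * pd (i, j) f x + j * pd (i, j - 1) f x := by
  have hsmooth (k : ℕ) : ContDiff ℝ ∞ (pd2^[k] f) := contDiff_iterate_dirDeriv hf (0, 1) k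
  have hinner : pd2^[j] (fun y => y.2 * f y) =
      (fun y => y.2 * pd2^[j] f y) + (j : ℝ) • pd2^[j - 1] f := by
    have h := iterate_dirDeriv_clm_smul (.snd ℝ ℝ ℝ) hf (0, 1) j
    simp only [ContinuousLinearMap.coe_snd', smul_eq_mul, mul_one] at h
    exact h
  have houter : pd1^[i] (fun y => y.2 * pd2^[j] f y) = fun y => y.2 * pd1^[i] (pd2^[j] f) y := by
    have h := iterate_dirDeriv_clm_smul (.snd ℝ ℝ ℝ) (hsmooth j) (1, 0) i
    simp only [ContinuousLinearMap.coe_snd', smul_eq_mul, mul_zero, zero_mul, add_zero] at h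
    exact h
  have hsplit := iterate_dirDeriv_add (contDiff_snd.mul (hsmooth j))
    ((hsmooth (j - 1)).const_smul (j : ℝ)) (1, 0) i
  have hscalar := iterate_dirDeriv_const_smul (j : ℝ) (pd2^[j - 1] f) (1, 0) i
  calc pd (i, j) (fun y => y.2 * f y) x
      = pd1^[i] ((fun y => y.2 * pd2^[j] f y) + (j : ℝ) • pd2^[j - 1] f) x :=
        congrFun (congrArg _ hinner) x
    _ = pd1^[i] (fun y => y.2 * pd2^[j] f y) x + pd1^[i] ((j : ℝ) • pd2^[j - 1] f) x :=
        congrFun hsplit x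
    _ = x.2 * pd (i, j) f x + j * pd (i, j - 1) f x :=
        congrArg₂ _ (congrFun houter x) (congrFun hscalar x)

lemma clm_prod_apply {F : Type*} [NormedAddCommGroup F] [NormedSpace ℝ F] (L : ℝ × ℝ →L[ℝ] F)
    (v : ℝ × ℝ) : L v = v.1 • L (1, 0) + v.2 • L (0, 1) := by
  rw [← map_smul, ← map_smul, ← map_add]
  congr 1
  ext <;> simp

lemma norm_clm_prod_le {F : Type*} [NormedAddCommGroup F] [NormedSpace ℝ F]
    (L : ℝ × ℝ →L[ℝ] F) : ‖L‖ ≤ ‖L (1, 0)‖ + ‖L (0, 1)‖ := by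
  refine L.opNorm_le_bound (by positivity) fun v => ?_
  calc ‖L v‖ = ‖v.1 • L (1, 0) + v.2 • L (0, 1)‖ := by rw [← clm_prod_apply]
    _ ≤ ‖v.1‖ * ‖L (1, 0)‖ + ‖v.2‖ * ‖L (0, 1)‖ := by
        simpa only [norm_smul] using norm_add_le (v.1 • L (1, 0)) (v.2 • L (0, 1))
    _ ≤ ‖v‖ * ‖L (1, 0)‖ + ‖v‖ * ‖L (0, 1)‖ := by
        gcongr
        exacts [norm_fst_le v, norm_snd_le v]
    _ = (‖L (1, 0)‖ + ‖L (0, 1)‖) * ‖v‖ := by ring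

lemma norm_fderiv_pd_le (hf : ContDiff ℝ ∞ f) (i j : ℕ) (x : ℝ × ℝ) :
    ‖fderiv ℝ (pd (i, j) f) x‖ ≤ |pd (i + 1, j) f x| + |pd (i, j + 1) f x| := by
  rw [pd_succ_left, pd_succ_right hf]
  exact norm_clm_prod_le _

end PartialDerivative

section TermwiseDifferentiation

variable {ι : Type*} {f : ι → ℝ × ℝ → ℝ} {u : ℕ × ℕ → ι → ℝ}

lemma summable_pd (hu : ∀ α, Summable (u α)) (hfu : ∀ α k x, |pd α (f k) x| ≤ u α k)
    (α : ℕ × ℕ) (x : ℝ × ℝ) : Summable fun k => pd α (f k) x :=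
  .of_norm_bounded (hu α) fun k => hfu α k x

lemma norm_fderiv_pd_le_majorant (hf : ∀ k, ContDiff ℝ ∞ (f k))
    (hfu : ∀ α k x, |pd α (f k) x| ≤ u α k) (i j : ℕ) (k : ι) (x : ℝ × ℝ) :
    ‖fderiv ℝ (pd (i, j) (f k)) x‖ ≤ u (i + 1, j) k + u (i, j + 1) k :=
  (norm_fderiv_pd_le (hf k) i j x).trans (add_le_add (hfu _ k x) (hfu _ k x))

lemma dirDeriv_tsum_pd (hf : ∀ k, ContDiff ℝ ∞ (f k)) (hu : ∀ α, Summable (u α))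
    (hfu : ∀ α k x, |pd α (f k) x| ≤ u α k) (i j : ℕ) (v : ℝ × ℝ) :
    dirDeriv v (fun x => ∑' k, pd (i, j) (f k) x) =
      fun x => ∑' k, dirDeriv v (pd (i, j) (f k)) x :=
  dirDeriv_tsum ((hu (i + 1, j)).add (hu (i, j + 1))) (fun k => differentiable_pd (hf k) (i, j))
    (norm_fderiv_pd_le_majorant hf hfu i j) (summable_pd hu hfu (i, j) 0) v

lemma pd_tsum (hf : ∀ k, ContDiff ℝ ∞ (f k)) (hu : ∀ α, Summable (u α))
    (hfu : ∀ α k x, |pd α (f k) x| ≤ u α k) (α : ℕ × ℕ) :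
    pd α (fun x => ∑' k, f k x) = fun x => ∑' k, pd α (f k) x := by
  obtain ⟨i, j⟩ := α
  induction i with
  | zero =>
    induction j with
    | zero => rfl
    | succ j ih =>
      simp only [pd_zero_succ, ih]
      exact dirDeriv_tsum_pd hf hu hfu 0 j (0, 1)
  | succ i ih =>
    simp only [pd_succ_left, ih]
    exact dirDeriv_tsum_pd hf hu hfu i j (1, 0)

lemma contDiff_tsum_of_pd (hf : ∀ k, ContDiff ℝ ∞ (f k)) (hu : ∀ α, Summable (u α))
    (hfu : ∀ α k x, |pd α (f k) x| ≤ u α k) : ContDiff ℝ ∞ fun x => ∑' k, f k x := by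
  suffices h : ∀ n : ℕ, ∀ i j, ContDiff ℝ n fun x => ∑' k, pd (i, j) (f k) x from
    contDiff_infty.2 fun n => h n 0 0
  intro n
  induction n with
  | zero =>
    intro i j
    exact contDiff_zero.2 <|
      continuous_tsum (fun k => (contDiff_pd (hf k) _).continuous) (hu (i, j)) (hfu (i, j))
  | succ n ih =>
    intro i j
    have hfderiv (x v : ℝ × ℝ) : fderiv ℝ (fun x => ∑' k, pd (i, j) (f k) x) x v =
        v.1 * ∑' k, pd (i + 1, j) (f k) x + v.2 * ∑' k, pd (i, j + 1) (f k) x := by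
      simp only [pd_succ_left, fun k => pd_succ_right (hf k)]
      rw [clm_prod_apply]
      exact congrArg₂ (fun a b => v.1 * a + v.2 * b)
        (congrFun (dirDeriv_tsum_pd hf hu hfu i j (1, 0)) x)
        (congrFun (dirDeriv_tsum_pd hf hu hfu i j (0, 1)) x)
    rw [Nat.cast_add, Nat.cast_one, contDiff_succ_iff_fderiv_apply]
    refine ⟨differentiable_tsum ((hu (i + 1, j)).add (hu (i, j + 1)))
      (fun k x => (differentiable_pd (hf k) (i, j) x).hasFDerivAt)
      (norm_fderiv_pd_le_majorant hf hfu i j), by simp, fun v => ?_⟩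
    simp only [hfderiv]
    exact (contDiff_const.mul (ih (i + 1) j)).add (contDiff_const.mul (ih i (j + 1)))

end TermwiseDifferentiation

section Kernel

/-- The function `1 / (1 + x₁² + m² x₂²)`, the building block of the base function. -/
def kernel (m : ℝ) (x : ℝ × ℝ) : ℝ := (1 + x.1 ^ 2 + m ^ 2 * x.2 ^ 2)⁻¹

lemma contDiff_kernel (m : ℝ) : ContDiff ℝ ∞ (kernel m) :=
  ContDiff.inv (by fun_prop) fun x => by positivity

lemma pd_fst_sq_mul {f : ℝ × ℝ → ℝ} (hf : ContDiff ℝ ∞ f) (i j : ℕ) (x : ℝ × ℝ) :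
    pd (i, j) (fun y => y.1 * (y.1 * f y)) x = x.1 ^ 2 * pd (i, j) f x +
      i * (2 * x.1 * pd (i - 1, j) f x + (i - 1 : ℕ) * pd (i - 1 - 1, j) f x) := by
  rw [pd_fst_mul (contDiff_fst.mul hf), pd_fst_mul hf, pd_fst_mul hf]
  ring

lemma pd_snd_sq_mul {f : ℝ × ℝ → ℝ} (hf : ContDiff ℝ ∞ f) (i j : ℕ) (x : ℝ × ℝ) :
    pd (i, j) (fun y => y.2 * (y.2 * f y)) x = x.2 ^ 2 * pd (i, j) f x +
      j * (2 * x.2 * pd (i, j - 1) f x + (j - 1 : ℕ) * pd (i, j - 1 - 1) f x) := by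
  rw [pd_snd_mul (contDiff_snd.mul hf), pd_snd_mul hf, pd_snd_mul hf]
  ring

/-- This is `∂₁^i ∂₂^j` applied to `(1 + x₁² + m² x₂²) * kernel m x = 1`. -/
lemma pd_kernel_recurrence (m : ℝ) {i j : ℕ} (hij : (i, j) ≠ 0) (x : ℝ × ℝ) :
    (1 + x.1 ^ 2 + m ^ 2 * x.2 ^ 2) * pd (i, j) (kernel m) x +
      i * (2 * x.1 * pd (i - 1, j) (kernel m) x + (i - 1 : ℕ) * pd (i - 1 - 1, j) (kernel m) x) +
      m ^ 2 * (j * (2 * x.2 * pd (i, j - 1) (kernel m) x +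
        (j - 1 : ℕ) * pd (i, j - 1 - 1) (kernel m) x)) = 0 := by
  have hk := contDiff_kernel m
  have hfst : ContDiff ℝ ∞ fun y : ℝ × ℝ => y.1 * (y.1 * kernel m y) := by fun_prop
  have hsnd : ContDiff ℝ ∞ fun y : ℝ × ℝ => y.2 * (y.2 * kernel m y) := by fun_prop
  have hsum : ContDiff ℝ ∞ (kernel m + fun y => y.1 * (y.1 * kernel m y)) := hk.add hfst
  have hscaled : ContDiff ℝ ∞ (m ^ 2 • fun y : ℝ × ℝ => y.2 * (y.2 * kernel m y)) :=
    hsnd.const_smul (m ^ 2)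
  have hone : kernel m + (fun y => y.1 * (y.1 * kernel m y)) +
      m ^ 2 • (fun y => y.2 * (y.2 * kernel m y)) = fun _ => 1 := by
    funext y
    have hy : 1 + y.1 ^ 2 + m ^ 2 * y.2 ^ 2 ≠ 0 := by positivity
    simp only [Pi.add_apply, Pi.smul_apply, smul_eq_mul, kernel]
    field_simp
  have hzero := congrFun (congrArg (pd (i, j)) hone) x
  rw [pd_const hij, pd_add hsum hscaled, pd_add hk hfst, pd_const_smul] at hzero
  simp only [Pi.add_apply, Pi.smul_apply, smul_eq_mul, Pi.zero_apply, pd_fst_sq_mul hk,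
    pd_snd_sq_mul hk] at hzero
  linarith

lemma mul_abs_pd_kernel_le (m : ℝ) {i j : ℕ} (hij : (i, j) ≠ 0) (x : ℝ × ℝ) :
    (1 + x.1 ^ 2 + m ^ 2 * x.2 ^ 2) * |pd (i, j) (kernel m) x| ≤
      i * (2 * |x.1| * |pd (i - 1, j) (kernel m) x| +
        (i - 1 : ℕ) * |pd (i - 1 - 1, j) (kernel m) x|) +
      m ^ 2 * (j * (2 * |x.2| * |pd (i, j - 1) (kernel m) x| +
        (j - 1 : ℕ) * |pd (i, j - 1 - 1) (kernel m) x|)) := by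
  have htriangle (n : ℕ) (t a b : ℝ) :
      |n * (2 * t * a + (n - 1 : ℕ) * b)| ≤ n * (2 * |t| * |a| + (n - 1 : ℕ) * |b|) := by
    rw [abs_mul, Nat.abs_cast]
    gcongr
    refine (abs_add_le _ _).trans_eq ?_
    simp only [abs_mul, Nat.abs_cast, abs_two]
  have hrec := pd_kernel_recurrence m hij x
  rw [add_assoc, add_eq_zero_iff_eq_neg] at hrec
  rw [← abs_of_nonneg (show 0 ≤ 1 + x.1 ^ 2 + m ^ 2 * x.2 ^ 2 by positivity), ← abs_mul, hrec,
    abs_neg]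
  refine (abs_add_le _ _).trans (add_le_add (htriangle _ _ _ _) ?_)
  rw [abs_mul, abs_of_nonneg (sq_nonneg m)]
  gcongr
  exact htriangle _ _ _ _

lemma natCast_mul_pred_le {a : ℕ → ℝ} {C r : ℝ} (hC : 0 ≤ C) (hr : 0 < r) {n : ℕ}
    (ha : ∀ k < n, a k ≤ C * (k ! / r ^ k)) : n * a (n - 1) ≤ r * C * (n ! / r ^ n) := by
  cases n with
  | zero => simp only [CharP.cast_eq_zero, zero_mul]; positivity
  | succ n =>
    calc ((n + 1 : ℕ) : ℝ) * a n ≤ (n + 1 : ℕ) * (C * (n ! / r ^ n)) := by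
          gcongr
          exact ha n n.lt_succ_self
      _ = r * C * ((n + 1)! / r ^ (n + 1)) := by
          rw [Nat.factorial_succ]
          push_cast
          field_simp
          ring

/-- Cauchy estimates of radius `r` for the lower-order terms bound the contribution of one variable
to the recurrence of `mul_abs_pd_kernel_le`. -/
lemma natCast_mul_two_mul_pred_add_le {a : ℕ → ℝ} {C r t : ℝ} (hC : 0 ≤ C) (hr : 0 < r)
    (ht : 0 ≤ t) (htr : t ≤ 8 * r) {n : ℕ} (ha : ∀ k < n, a k ≤ C * (k ! / r ^ k)) :
    n * (2 * t * a (n - 1) + (n - 1 : ℕ) * a (n - 1 - 1)) ≤ 17 * r ^ 2 * (C * (n ! / r ^ n)) := by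
  have hfirst : n * a (n - 1) ≤ r * C * (n ! / r ^ n) := natCast_mul_pred_le hC hr ha
  have hsecond : n * ((n - 1 : ℕ) * a (n - 1 - 1)) ≤ r * (r * C) * (n ! / r ^ n) :=
    natCast_mul_pred_le (a := fun k => k * a (k - 1)) (by positivity) hr fun k hk =>
      natCast_mul_pred_le hC hr fun l hl => ha l (hl.trans hk)
  calc n * (2 * t * a (n - 1) + (n - 1 : ℕ) * a (n - 1 - 1))
      = 2 * t * (n * a (n - 1)) + n * ((n - 1 : ℕ) * a (n - 1 - 1)) := by ring
    _ ≤ 2 * t * (r * C * (n ! / r ^ n)) + r * (r * C) * (n ! / r ^ n) := by gcongr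
    _ ≤ 2 * (8 * r) * (r * C * (n ! / r ^ n)) + r * (r * C) * (n ! / r ^ n) := by gcongr
    _ = 17 * r ^ 2 * (C * (n ! / r ^ n)) := by ring

/-- A Cauchy estimate on the polydisc of radii `r` and `r / m` around `x`, for `8 * r` the square
root of the denominator of `kernel m x`. -/
lemma abs_pd_kernel_le_cauchy {m r : ℝ} (hm : 0 < m) (hr : 0 < r) {x : ℝ × ℝ}
    (hx : (8 * r) ^ 2 = 1 + x.1 ^ 2 + m ^ 2 * x.2 ^ 2) (i j : ℕ) :
    |pd (i, j) (kernel m) x| ≤ ((8 * r) ^ 2)⁻¹ * (i ! / r ^ i) * (j ! / (r / m) ^ j) := by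
  induction hn : i + j using Nat.strong_induction_on generalizing i j with
  | _ n ih =>
  subst hn
  by_cases hij : (i, j) = 0
  · obtain ⟨rfl, rfl⟩ := Prod.mk_eq_zero.1 hij
    have hpos : 0 ≤ kernel m x := by unfold kernel; positivity
    change |kernel m x| ≤ _
    rw [abs_of_nonneg hpos]
    simp [kernel, hx]
  set B := ((8 * r) ^ 2)⁻¹ * (i ! / r ^ i) * (j ! / (r / m) ^ j) with hB
  have hx₁ : |x.1| ≤ 8 * r :=
    abs_le_of_sq_le_sq (by nlinarith [sq_nonneg (m * x.2)]) (by positivity)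
  have hx₂ : |x.2| ≤ 8 * (r / m) := by
    rw [mul_div_assoc', le_div_iff₀ hm, ← abs_of_pos hm, ← abs_mul]
    exact abs_le_of_sq_le_sq (by nlinarith [sq_nonneg x.1]) (by positivity)
  have hfst := natCast_mul_two_mul_pred_add_le (a := fun k => |pd (k, j) (kernel m) x|)
    (C := ((8 * r) ^ 2)⁻¹ * (j ! / (r / m) ^ j)) (by positivity) hr (abs_nonneg x.1) hx₁ (n := i)
    fun k hk => (ih (k + j) (by omega) k j rfl).trans_eq (mul_right_comm _ _ _)
  have hsnd := natCast_mul_two_mul_pred_add_le (a := fun k => |pd (i, k) (kernel m) x|)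
    (C := ((8 * r) ^ 2)⁻¹ * (i ! / r ^ i)) (by positivity) (div_pos hr hm) (abs_nonneg x.2) hx₂
    (n := j) fun k hk => ih (i + k) (by omega) i k rfl
  have hstep : (8 * r) ^ 2 * |pd (i, j) (kernel m) x| ≤ (8 * r) ^ 2 * B :=
    calc (8 * r) ^ 2 * |pd (i, j) (kernel m) x|
        ≤ 17 * r ^ 2 * B + m ^ 2 * (17 * (r / m) ^ 2 * B) := by
          rw [hx]
          refine (mul_abs_pd_kernel_le m hij x).trans (add_le_add ?_ ?_)
          · exact hfst.trans_eq (by rw [hB]; ring)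
          · exact mul_le_mul_of_nonneg_left hsnd (sq_nonneg m)
      _ = 34 * (r ^ 2 * B) := by field_simp; ring
      _ ≤ 64 * (r ^ 2 * B) := by gcongr; norm_num
      _ = (8 * r) ^ 2 * B := by ring
  exact le_of_mul_le_mul_left hstep (by positivity)

lemma abs_pd_kernel_le {m : ℝ} (hm : 1 ≤ m) (α : ℕ × ℕ) (x : ℝ × ℝ) :
    |pd α (kernel m) x| ≤ 8 ^ (α.1 + α.2) * (α.1 ! * α.2 !) * m ^ α.2 /
      (1 + x.1 ^ 2 + x.2 ^ 2) ^ (1 + ((α.1 + α.2 : ℕ) : ℝ) / 2) := by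
  obtain ⟨i, j⟩ := α
  have hm₀ : 0 < m := one_pos.trans_le hm
  set Q := 1 + x.1 ^ 2 + m ^ 2 * x.2 ^ 2 with hQ
  have hQpos : 0 < Q := by positivity
  have hcauchy := abs_pd_kernel_le_cauchy (r := √Q / 8) hm₀ (by positivity) (x := x)
    (by rw [mul_div_cancel₀ _ (by norm_num), Real.sq_sqrt hQpos.le]) i j
  have hpow : Q ^ (1 + ((i + j : ℕ) : ℝ) / 2) = Q * √Q ^ (i + j) := by
    rw [Real.rpow_add hQpos, Real.rpow_one, Real.rpow_div_two_eq_sqrt _ hQpos.le,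
      Real.rpow_natCast]
  calc |pd (i, j) (kernel m) x|
      ≤ 8 ^ (i + j) * (i ! * j !) * m ^ j / Q ^ (1 + ((i + j : ℕ) : ℝ) / 2) := by
        refine hcauchy.trans_eq ?_
        rw [hpow, mul_div_cancel₀ _ (by norm_num), Real.sq_sqrt hQpos.le]
        simp only [div_pow, pow_add]
        field_simp
    _ ≤ 8 ^ (i + j) * (i ! * j !) * m ^ j /
        (1 + x.1 ^ 2 + x.2 ^ 2) ^ (1 + ((i + j : ℕ) : ℝ) / 2) := by
        gcongr
        rw [hQ]
        gcongr
        exact le_mul_of_one_le_left (sq_nonneg _) (one_le_pow₀ hm)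

lemma pd_kernel_origin (m : ℝ) (n : ℕ) :
    pd (0, 2 * n) (kernel m) (0, 0) = (-1) ^ n * ((2 * n)! * m ^ (2 * n)) := by
  induction n with
  | zero => simp [pd, kernel]
  | succ n ih =>
    have hrec := pd_kernel_recurrence m (i := 0) (j := 2 * n + 2) (by simp) (0, 0)
    simp only [Nat.add_sub_cancel, show 2 * n + 2 - 1 = 2 * n + 1 by omega, ih] at hrec
    rw [show 2 * (n + 1) = 2 * n + 2 by ring, Nat.factorial_succ, Nat.factorial_succ]
    push_cast at hrec ⊢
    linear_combination hrec

end Kernel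

section Weight

variable {M : ℕ → ℝ}

/-- The quotient of consecutive terms of `M`; it is the reciprocal of `rhoSeq M k`. -/
def succRatio (M : ℕ → ℝ) (k : ℕ) : ℝ := M (k + 1) / M k

/-- The coefficient of `kernel (succRatio M k)` in the base function. Its factor
`M k / succRatio M k ^ k` is the minimum over `j` of `M j / succRatio M k ^ j`. -/
def weight (M : ℕ → ℝ) (k : ℕ) : ℝ := (1 / 2) ^ k * (M k / succRatio M k ^ k)

lemma succRatio_pos (hMpos : ∀ k, 0 < M k) (k : ℕ) : 0 < succRatio M k :=
  div_pos (hMpos _) (hMpos _)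

lemma one_le_succRatio (hMpos : ∀ k, 0 < M k) (hMmono : Monotone M) (k : ℕ) :
    1 ≤ succRatio M k :=
  (one_le_div (hMpos k)).2 (hMmono k.le_succ)

lemma weight_nonneg (hMpos : ∀ k, 0 < M k) (k : ℕ) : 0 ≤ weight M k := by
  have hM := hMpos k
  have hratio := succRatio_pos hMpos k
  unfold weight
  positivity

lemma div_succRatio_pow_le (hMpos : ∀ k, 0 < M k) (hMlc : LogConvexSeq M) (k j : ℕ) :
    M k / succRatio M k ^ k ≤ M j / succRatio M k ^ j := by
  have hratio := succRatio_pos hMpos k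
  have hstep (l : ℕ) : M (l + 1) / succRatio M k ^ (l + 1) =
      M l / succRatio M k ^ l * (succRatio M l / succRatio M k) := by
    have hsucc : M (l + 1) = M l * succRatio M l := (mul_div_cancel₀ _ (hMpos l).ne').symm
    rw [hsucc, pow_succ, mul_div_mul_comm]
  have hnonneg (l : ℕ) : 0 ≤ M l / succRatio M k ^ l := div_nonneg (hMpos l).le (by positivity)
  rcases le_total k j with hkj | hjk
  · refine monotoneOn_nat_Ici_of_le_succ (f := fun l => M l / succRatio M k ^ l) (fun l hl => ?_)
      (le_refl k) hkj hkj
    rw [hstep]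
    exact le_mul_of_one_le_right (hnonneg l) ((one_le_div hratio).2 (hMlc hl))
  · refine antitoneOn_of_add_one_le (f := fun l => M l / succRatio M k ^ l) Set.ordConnected_Iic
      (fun l _ hl _ => ?_) hjk (le_refl k) hjk
    rw [hstep]
    exact mul_le_of_le_one_right (hnonneg l) ((div_le_one hratio).2 (hMlc hl))

lemma weight_mul_pow_le (hMpos : ∀ k, 0 < M k) (hMlc : LogConvexSeq M) (k j : ℕ) :
    weight M k * succRatio M k ^ j ≤ (1 / 2) ^ k * M j := by
  have hratio := succRatio_pos hMpos k
  rw [weight, mul_assoc]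
  gcongr
  exact (le_div_iff₀ (by positivity)).1 (div_succRatio_pow_le hMpos hMlc k j)

lemma weight_mul_pow_self (hMpos : ∀ k, 0 < M k) (k : ℕ) :
    weight M k * succRatio M k ^ k = (1 / 2) ^ k * M k := by
  rw [weight, mul_assoc, div_mul_cancel₀ _ (pow_pos (succRatio_pos hMpos k) k).ne']

end Weight

section BaseFunction

variable {M : ℕ → ℝ}

/-- The `k`-th summand of the base function. -/
def baseTerm (M : ℕ → ℝ) (k : ℕ) : ℝ × ℝ → ℝ := weight M k • kernel (succRatio M k)

/-- The function whose existence the theorem asserts. Unlike `baseH M`, the series has a summand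
`k = 0`, which is what makes the lower bound at the origin hold for `n = 0`. -/
def baseFunction (M : ℕ → ℝ) (x : ℝ × ℝ) : ℝ := ∑' k, baseTerm M k x

lemma contDiff_baseTerm (M : ℕ → ℝ) (k : ℕ) : ContDiff ℝ ∞ (baseTerm M k) :=
  (contDiff_kernel (succRatio M k)).const_smul (weight M k)

lemma pd_baseTerm (M : ℕ → ℝ) (α : ℕ × ℕ) (k : ℕ) (x : ℝ × ℝ) :
    pd α (baseTerm M k) x = weight M k * pd α (kernel (succRatio M k)) x :=
  congrFun (pd_const_smul _ _ _) x

lemma abs_pd_baseTerm_le (hMpos : ∀ k, 0 < M k) (hMmono : Monotone M) (hMlc : LogConvexSeq M)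
    (α : ℕ × ℕ) (k : ℕ) (x : ℝ × ℝ) :
    |pd α (baseTerm M k) x| ≤ (1 / 2) ^ k * (8 ^ (α.1 + α.2) * (α.1 ! * α.2 !) * M α.2 /
      (1 + x.1 ^ 2 + x.2 ^ 2) ^ (1 + ((α.1 + α.2 : ℕ) : ℝ) / 2)) := by
  set D := (1 + x.1 ^ 2 + x.2 ^ 2) ^ (1 + ((α.1 + α.2 : ℕ) : ℝ) / 2)
  calc |pd α (baseTerm M k) x| = weight M k * |pd α (kernel (succRatio M k)) x| := by
        rw [pd_baseTerm, abs_mul, abs_of_nonneg (weight_nonneg hMpos k)]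
    _ ≤ weight M k * (8 ^ (α.1 + α.2) * (α.1 ! * α.2 !) * succRatio M k ^ α.2 / D) :=
        mul_le_mul_of_nonneg_left (abs_pd_kernel_le (one_le_succRatio hMpos hMmono k) α x)
          (weight_nonneg hMpos k)
    _ = weight M k * succRatio M k ^ α.2 * (8 ^ (α.1 + α.2) * (α.1 ! * α.2 !) / D) := by ring
    _ ≤ (1 / 2) ^ k * M α.2 * (8 ^ (α.1 + α.2) * (α.1 ! * α.2 !) / D) :=
        mul_le_mul_of_nonneg_right (weight_mul_pow_le hMpos hMlc k α.2) (by positivity)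
    _ = (1 / 2) ^ k * (8 ^ (α.1 + α.2) * (α.1 ! * α.2 !) * M α.2 / D) := by ring

lemma abs_pd_baseTerm_le_uniform (hMpos : ∀ k, 0 < M k) (hMmono : Monotone M)
    (hMlc : LogConvexSeq M) (α : ℕ × ℕ) (k : ℕ) (x : ℝ × ℝ) :
    |pd α (baseTerm M k) x| ≤ (1 / 2) ^ k * (8 ^ (α.1 + α.2) * (α.1 ! * α.2 !) * M α.2) := by
  have hM := hMpos α.2
  refine (abs_pd_baseTerm_le hMpos hMmono hMlc α k x).trans ?_
  gcongr
  refine div_le_self (by positivity) (Real.one_le_rpow ?_ (by positivity))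
  nlinarith [sq_nonneg x.1, sq_nonneg x.2]

lemma summable_majorant (M : ℕ → ℝ) (α : ℕ × ℕ) :
    Summable fun k : ℕ => (1 / 2 : ℝ) ^ k * (8 ^ (α.1 + α.2) * (α.1 ! * α.2 !) * M α.2) :=
  summable_geometric_two.mul_right _

lemma contDiff_baseFunction (hMpos : ∀ k, 0 < M k) (hMmono : Monotone M)
    (hMlc : LogConvexSeq M) : ContDiff ℝ ∞ (baseFunction M) :=
  contDiff_tsum_of_pd (contDiff_baseTerm M) (summable_majorant M)
    (abs_pd_baseTerm_le_uniform hMpos hMmono hMlc)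

lemma pd_baseFunction (hMpos : ∀ k, 0 < M k) (hMmono : Monotone M) (hMlc : LogConvexSeq M)
    (α : ℕ × ℕ) : pd α (baseFunction M) = fun x => ∑' k, pd α (baseTerm M k) x :=
  pd_tsum (contDiff_baseTerm M) (summable_majorant M)
    (abs_pd_baseTerm_le_uniform hMpos hMmono hMlc) α

lemma abs_pd_baseFunction_le (hMpos : ∀ k, 0 < M k) (hMmono : Monotone M)
    (hMlc : LogConvexSeq M) (x : ℝ × ℝ) (α : ℕ × ℕ) :
    |pd α (baseFunction M) x| ≤ 2 * 8 ^ (α.1 + α.2) * (α.1 ! * α.2 !) * M α.2 /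
      (1 + x.1 ^ 2 + x.2 ^ 2) ^ (1 + ((α.1 + α.2 : ℕ) : ℝ) / 2) := by
  rw [pd_baseFunction hMpos hMmono hMlc]
  have hbound := tsum_of_norm_bounded (f := fun k => pd α (baseTerm M k) x)
    (hasSum_geometric_two.mul_right _) fun k => abs_pd_baseTerm_le hMpos hMmono hMlc α k x
  exact hbound.trans_eq (by ring)

/-- All summands of the differentiated series have the sign `(-1) ^ n` at the origin, so the summand
`k = 2 * n` alone is a lower bound. -/
lemma le_abs_pd_baseFunction_origin (hMpos : ∀ k, 0 < M k) (hMmono : Monotone M)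
    (hMlc : LogConvexSeq M) (n : ℕ) :
    (2 * n)! * M (2 * n) / 2 ^ (2 * n) ≤ |pd (0, 2 * n) (baseFunction M) (0, 0)| := by
  set a : ℕ → ℝ := fun k => (2 * n)! * (weight M k * succRatio M k ^ (2 * n)) with ha
  have hterm (k : ℕ) : pd (0, 2 * n) (baseTerm M k) (0, 0) = (-1) ^ n * a k := by
    rw [pd_baseTerm, pd_kernel_origin]
    ring
  have hnonneg (k : ℕ) : 0 ≤ a k :=
    mul_nonneg (Nat.cast_nonneg _)
      (mul_nonneg (weight_nonneg hMpos k) (pow_pos (succRatio_pos hMpos k) _).le)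
  have hsummable : Summable a := by
    have h := summable_pd (summable_majorant M)
      (abs_pd_baseTerm_le_uniform hMpos hMmono hMlc) (0, 2 * n) (0, 0)
    simp only [hterm] at h
    exact (summable_mul_left_iff (by simp)).1 h
  have hsum : |pd (0, 2 * n) (baseFunction M) (0, 0)| = ∑' k, a k := by
    simp only [pd_baseFunction hMpos hMmono hMlc, hterm]
    rw [tsum_mul_left, abs_mul, abs_neg_one_pow, one_mul, abs_of_nonneg (tsum_nonneg hnonneg)]
  calc (2 * n)! * M (2 * n) / 2 ^ (2 * n) = a (2 * n) := by
        simp only [ha, weight_mul_pow_self hMpos, one_div, inv_pow]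
        ring
    _ ≤ ∑' k, a k := hsummable.le_tsum (2 * n) fun k _ => hnonneg k
    _ = |pd (0, 2 * n) (baseFunction M) (0, 0)| := hsum.symm

end BaseFunction

theorem exists_base_function_general (M : ℕ → ℝ) (hMpos : ∀ k, 0 < M k) (hMmono : Monotone M)
    (hMlc : LogConvexSeq M) :
    ∃ h : ℝ × ℝ → ℝ, ContDiff ℝ ∞ h ∧
      (∀ x : ℝ × ℝ, ∀ α : ℕ × ℕ,
        |pd α h x| ≤ 2 * 8 ^ (α.1 + α.2) * (α.1 ! * α.2 !) * M α.2 /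
          (1 + x.1 ^ 2 + x.2 ^ 2) ^ (1 + ((α.1 + α.2 : ℕ) : ℝ) / 2)) ∧
      (∀ n : ℕ, (2 * n)! * M (2 * n) / 2 ^ (2 * n) ≤ |pd (0, 2 * n) h (0, 0)|) :=
  ⟨baseFunction M, contDiff_baseFunction hMpos hMmono hMlc,
    abs_pd_baseFunction_le hMpos hMmono hMlc, le_abs_pd_baseFunction_origin hMpos hMmono hMlc⟩

/-- Proposition 3.6 (base function): there exists `h ∈ C^∞(ℝ²)` with
(i) `|∂^α h(x)| ≤ 64·8^{|α|+1} α! M_{α₂}/(1 + x₁² + x₂²)^{1+|α|/2}` and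
(ii) `|∂^{2n}h/∂x₂^{2n}(0,0)| ≥ (2n)! M_{2n}/2^{2n}`. -/
theorem exists_base_function (M : ℕ → ℝ) (hMpos : ∀ k, 0 < M k) (hMmono : Monotone M)
    (hMlc : LogConvexSeq M) (hM0 : M 0 = 1) :
    ∃ h : ℝ × ℝ → ℝ, ContDiff ℝ (⊤ : ℕ∞) h ∧
      (∀ x : ℝ × ℝ, ∀ α : ℕ × ℕ,
        |pd α h x| ≤ 64 * 8 ^ (α.1 + α.2 + 1) * (Nat.factorial α.1 * Nat.factorial α.2) *
          M α.2 / (1 + x.1 ^ 2 + x.2 ^ 2) ^ (1 + ((α.1 + α.2 : ℕ) : ℝ) / 2)) ∧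
      (∀ n : ℕ, (Nat.factorial (2 * n) : ℝ) * M (2 * n) / 2 ^ (2 * n) ≤
        |pd (0, 2 * n) h (0, 0)|) := by
  obtain ⟨h, hsmooth, hupper, hlower⟩ := exists_base_function_general M hMpos hMmono hMlc
  refine ⟨h, hsmooth, fun x α => (hupper x α).trans ?_, hlower⟩
  have hM := hMpos α.2
  gcongr ?_ * _ * _ / _
  exact mul_le_mul (by norm_num) (pow_le_pow_right₀ (by norm_num) (by omega)) (by positivity)
    (by norm_num)
end
end
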